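/- arXiv:1904.00848 — 8 statements merged into one kernel-verified Lean document; each statement's English description precedes it below -/
import Mathlib

section
/- Let U be an n×n unitary matrix with distinct eigenvalues u₁,…,uₙ and an orthonormal basis of eigenvectors φ₁,…,φₙ (so Uφ_j = u_j φ_j). Let v be a unit vector in ℂⁿ and set ρ_j = |⟨φ_j, v⟩|². Let η be a complex number of modulus 1 with η ≠ 1. Then for every complex number u that is not an eigenvalue of U, u is an eigenvalue of the matrix U(I + (η−1)vv*) if and only if 1 = (1−η) Σ_{j=1}^{n} ρ_j · u_j/(u_j − u). -/
open Matrix BigOperators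

/-!
Write `1 + v ⊗ ℓ` for `w ↦ w + ℓ w • v`, Mathlib's `LinearMap.transvection ℓ v`, which does not
require `ℓ v = 0`. If `u` is not an eigenvalue of `f` and `(f - u) x = f v`, then
`f ∘ (1 + v ⊗ ℓ) - u = (f - u) ∘ (1 + x ⊗ ℓ)`, so `u` is an eigenvalue of `f ∘ (1 + v ⊗ ℓ)` exactly
when `1 + x ⊗ ℓ` has a nonzero kernel, that is, when `ℓ x = -1`. In an eigenbasis of `f`, the
`j`-th coefficient of `x` is `u_j / (u_j - u)` times that of `v`, and for `ℓ = (η - 1) v*` the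
condition `ℓ x = -1` becomes the stated equation.
-/

section RankOnePerturbation

open Module End LinearMap

variable {R M : Type*} [CommRing R] [AddCommGroup M] [Module R M]

theorem ker_transvection_eq_bot_iff [IsDomain R] (ℓ : Dual R M) (x : M) :
    ker (transvection ℓ x) = ⊥ ↔ ℓ x ≠ -1 := by
  rw [ker_eq_bot']
  constructor
  · intro hker hx
    have hx0 : x = 0 := hker x (by rw [transvection.apply, hx, neg_one_smul, add_neg_cancel])
    simp [hx0] at hx
  · intro hx w hw
    rw [transvection.apply] at hw
    have hmul : ℓ w * (1 + ℓ x) = 0 := by simpa [mul_add] using congrArg ℓ hw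
    have hℓw : ℓ w = 0 :=
      (mul_eq_zero.mp hmul).resolve_right fun h ↦ hx (eq_neg_of_add_eq_zero_right h)
    simpa [hℓw] using hw

theorem mul_transvection_sub_smul_one {f : End R M} {u : R} {v x : M}
    (hx : f x = u • x + f v) (ℓ : Dual R M) :
    f * transvection ℓ v - u • 1 = (f - u • 1) * transvection ℓ x := by
  ext w
  simp only [LinearMap.sub_apply, LinearMap.smul_apply, End.mul_apply, End.one_apply,
    transvection.apply, map_add, map_smul, hx]
  module

theorem hasEigenvalue_mul_transvection_iff [IsDomain R] {f : End R M} {u : R}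
    (hu : ¬ f.HasEigenvalue u) {v x : M} (hx : f x = u • x + f v) (ℓ : Dual R M) :
    (f * transvection ℓ v).HasEigenvalue u ↔ ℓ x = -1 := by
  have hker : ker (f - u • 1) = ⊥ := by
    rwa [hasEigenvalue_iff, eigenspace_def, not_not] at hu
  rw [hasEigenvalue_iff, eigenspace_def, mul_transvection_sub_smul_one hx, End.mul_eq_comp,
    ker_comp_of_ker_eq_bot _ hker, ne_eq, ker_transvection_eq_bot_iff, not_not]

variable {K V ι : Type*} [Field K] [AddCommGroup V] [Module K V]

theorem apply_div_sub_smul_of_apply_eq_smul {f : End K V} {u a : K} {b : V}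
    (hu : ¬ f.HasEigenvalue u) (hb : f b = a • b) :
    f ((a / (a - u)) • b) = u • (a / (a - u)) • b + f b := by
  rcases eq_or_ne b 0 with rfl | hb0
  · simp
  have hau : a - u ≠ 0 := fun h ↦
    hu (hasEigenvalue_of_hasEigenvector ⟨mem_eigenspace_iff.mpr (sub_eq_zero.mp h ▸ hb), hb0⟩)
  rw [map_smul, hb, smul_smul, smul_smul, ← add_smul]
  congr 1
  field_simp
  ring

theorem hasEigenvalue_mul_transvection_sum_iff [Fintype ι] {f : End K V} {u : K}
    (hu : ¬ f.HasEigenvalue u) {a : ι → K} {b : ι → V} (hb : ∀ j, f (b j) = a j • b j)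
    (c : ι → K) (ℓ : Dual K V) :
    (f * transvection ℓ (∑ j, c j • b j)).HasEigenvalue u ↔
      ∑ j, c j * (a j / (a j - u) * ℓ (b j)) = -1 := by
  have hx : f (∑ j, c j • (a j / (a j - u)) • b j) =
      u • ∑ j, c j • (a j / (a j - u)) • b j + f (∑ j, c j • b j) := by
    simp only [map_sum, map_smul f (c _), apply_div_sub_smul_of_apply_eq_smul hu (hb _), smul_add,
      Finset.sum_add_distrib, Finset.smul_sum, smul_comm u (c _)]
  simp only [hasEigenvalue_mul_transvection_iff hu hx, map_sum, map_smul, smul_eq_mul]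

end RankOnePerturbation

section Matrix

variable {R ι : Type*} [CommRing R] [Fintype ι] [DecidableEq ι]

theorem hasEigenvalue_toLin'_iff_exists_mulVec_eq_smul {A : Matrix ι ι R} {u : R} :
    Module.End.HasEigenvalue (toLin' A) u ↔ ∃ w : ι → R, w ≠ 0 ∧ A *ᵥ w = u • w := by
  simp only [Module.End.hasEigenvalue_iff, Submodule.ne_bot_iff, Module.End.mem_eigenspace_iff,
    toLin'_apply, and_comm]

theorem toLin'_one_add_vecMulVec (v y : ι → R) :
    toLin' (1 + vecMulVec v y) = LinearMap.transvection (dotProductEquiv R ι y) v := by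
  refine LinearMap.ext fun w ↦ ?_
  simp [vecMulVec_mulVec, LinearMap.transvection.apply]

theorem sum_dotProduct_smul_eq_of_biorthogonal {ψ φ : ι → ι → R}
    (h : ∀ j k, ψ j ⬝ᵥ φ k = if j = k then 1 else 0) (v : ι → R) :
    ∑ j, (ψ j ⬝ᵥ v) • φ j = v := by
  have hleft : of ψ * (of φ)ᵀ = 1 := by
    ext j k
    exact (h j k).trans one_apply.symm
  have hright : (of φ)ᵀ * of ψ = 1 := mul_eq_one_comm.mp hleft
  calc ∑ j, (ψ j ⬝ᵥ v) • φ j = (of φ)ᵀ *ᵥ (of ψ *ᵥ v) := by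
        ext i
        simp [mulVec, dotProduct, mul_comm]
    _ = v := by rw [mulVec_mulVec, hright, one_mulVec]

end Matrix

theorem reflection_eigenvalue_equation_general {𝕜 ι : Type*} [RCLike 𝕜] [Fintype ι]
    [DecidableEq ι] (A : Matrix ι ι 𝕜) (a : ι → 𝕜) (φ : ι → ι → 𝕜)
    (hortho : ∀ j k, (∑ i, (starRingEnd 𝕜) (φ j i) * φ k i) = if j = k then 1 else 0)
    (heig : ∀ j, A *ᵥ φ j = a j • φ j) (v : ι → 𝕜) (η u : 𝕜)
    (hu : ¬ ∃ w : ι → 𝕜, w ≠ 0 ∧ A *ᵥ w = u • w) :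
    (∃ w : ι → 𝕜, w ≠ 0 ∧
        (A * (1 + (η - 1) • vecMulVec v (fun i ↦ (starRingEnd 𝕜) (v i)))) *ᵥ w = u • w)
      ↔ 1 = (1 - η) *
          ∑ j, ((‖∑ i, (starRingEnd 𝕜) (φ j i) * v i‖ ^ 2 : ℝ) : 𝕜) * (a j / (a j - u)) := by
  let c : ι → 𝕜 := fun j ↦ ∑ i, (starRingEnd 𝕜) (φ j i) * v i
  let ℓ := dotProductEquiv 𝕜 ι ((η - 1) • fun i ↦ (starRingEnd 𝕜) (v i))
  have hv : ∑ j, c j • φ j = v :=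
    sum_dotProduct_smul_eq_of_biorthogonal (ψ := fun j i ↦ (starRingEnd 𝕜) (φ j i)) hortho v
  have hreflection : toLin' (1 + (η - 1) • vecMulVec v fun i ↦ (starRingEnd 𝕜) (v i)) =
      LinearMap.transvection ℓ (∑ j, c j • φ j) := by
    rw [hv, ← vecMulVec_smul, toLin'_one_add_vecMulVec]
  have hℓφ (j : ι) : ℓ (φ j) = (η - 1) * (starRingEnd 𝕜) (c j) := by
    simp [ℓ, c, dotProduct, mul_comm]
  have hterm (j : ι) : c j * (a j / (a j - u) * ℓ (φ j)) =
      -(1 - η) * (((‖c j‖ ^ 2 : ℝ) : 𝕜) * (a j / (a j - u))) := by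
    rw [hℓφ, RCLike.ofReal_pow, ← RCLike.mul_conj]
    ring
  rw [← hasEigenvalue_toLin'_iff_exists_mulVec_eq_smul] at hu ⊢
  rw [toLin'_mul, hreflection, ← Module.End.mul_eq_comp,
    hasEigenvalue_mul_transvection_sum_iff hu heig, Finset.sum_congr rfl fun j _ ↦ hterm j,
    ← Finset.mul_sum, neg_mul, neg_inj, eq_comm]

/-- For a unitary `U` with distinct eigenvalues `u_j`, orthonormal eigenbasis `φ_j`,
a unit vector `v` with `ρ_j = |⟨φ_j, v⟩|²`, and `η` of modulus one, `η ≠ 1`: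
a complex `u` that is not an eigenvalue of `U` is an eigenvalue of
`U (I + (η-1) v v*)` iff `1 = (1-η) Σ_j ρ_j u_j/(u_j - u)`. -/
theorem reflection_eigenvalue_equation
    (n : ℕ) (U : Matrix (Fin n) (Fin n) ℂ)
    (hU : U ∈ Matrix.unitaryGroup (Fin n) ℂ)
    (uval : Fin n → ℂ) (hdist : Function.Injective uval)
    (φ : Fin n → Fin n → ℂ)
    (hortho : ∀ j k, (∑ i, (starRingEnd ℂ) (φ j i) * φ k i) = if j = k then 1 else 0)
    (heig : ∀ j, U.mulVec (φ j) = uval j • φ j)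
    (v : Fin n → ℂ) (hv : (∑ i, (starRingEnd ℂ) (v i) * v i) = 1)
    (η : ℂ) (hη : ‖η‖ = 1) (hη1 : η ≠ 1)
    (u : ℂ) (hu : ¬ ∃ w : Fin n → ℂ, w ≠ 0 ∧ U.mulVec w = u • w) :
    (∃ w : Fin n → ℂ, w ≠ 0 ∧
        (U * (1 + (η - 1) • Matrix.vecMulVec v (fun i => (starRingEnd ℂ) (v i)))).mulVec w
          = u • w)
      ↔ 1 = (1 - η) *
          ∑ j, ((‖∑ i, (starRingEnd ℂ) (φ j i) * v i‖ ^ 2 : ℝ) : ℂ)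
            * (uval j / (uval j - u)) :=
  reflection_eigenvalue_equation_general U uval φ hortho heig v η u hu
end

section
/- Let U be an n×n unitary matrix with distinct eigenvalues u_j = e^{iθ_j}, 1 ≤ j ≤ n, where θ₁ < θ₂ < … < θₙ < θ₁ + 2π, let v be a unit vector in ℂⁿ whose coefficients a_j in an orthonormal eigenbasis of U satisfy ρ_j = |a_j|² > 0 for all j, and let η be a complex number of modulus 1 with η ≠ 1. Then the unitary matrix U(I + (η−1)vv*) has exactly one eigenvalue of the form e^{iφ} with φ ∈ (θ_j, θ_{j+1}) for each j ∈ {1,…,n} (with the convention θ_{n+1} = θ₁ + 2π), and these n eigenvalues are all of its eigenvalues; in other words, the eigenvalues of U(I + (η−1)vv*) strictly interlace with those of U on the unit circle. -/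
open Matrix BigOperators Set

/-!
In an orthonormal eigenbasis of `U` the matrix `U (I + (η - 1) v v*)` is a rank-one perturbation of
a diagonal matrix, so a number `μ` which is not one of the `u_k` is an eigenvalue if and only if it
solves the secular equation `∑ |a_k|² (μ + u_k) / (μ - u_k) = (η + 1) / (η - 1)`, and the `u_k`
themselves are not eigenvalues since no `a_k` vanishes. On the unit circle, at `μ = e^{ix}`, both
sides are purely imaginary: `(e^{ix} + e^{it}) / (e^{ix} - e^{it}) = -i cot ((x - t) / 2)`. The
equation thus equates a positive combination of the functions `x ↦ -cot ((x - θ_k) / 2)` with a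
constant. On each arc between consecutive eigenvalues of `U` this combination is continuous and
increases strictly from `-∞` to `+∞`, so the arc contains exactly one solution; and all
eigenvalues lie on the circle because the matrix is unitary.
-/

open Filter Topology
open scoped Real

theorem tendsto_sum_atTop_of_tendsto_of_isBoundedUnder {ι α M : Type*} [AddCommGroup M]
    [PartialOrder M] [IsOrderedAddMonoid M] {l : Filter α} {s : Finset ι} {f : ι → α → M} {i : ι}
    (his : i ∈ s) (hi : Tendsto (f i) l atTop)
    (hbdd : ∀ k ∈ s, k ≠ i → l.IsBoundedUnder (· ≥ ·) (f k)) :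
    Tendsto (fun x => ∑ k ∈ s, f k x) l atTop := by
  classical
  obtain ⟨C, hC⟩ : l.IsBoundedUnder (· ≥ ·) (∑ k ∈ s.erase i, f k) :=
    isBoundedUnder_ge_sum _ fun k hk =>
      hbdd k (Finset.mem_of_mem_erase hk) (Finset.ne_of_mem_erase hk)
  refine (tendsto_atTop_add_right_of_le' l C hi (eventually_map.1 hC)).congr fun x => ?_
  rw [Finset.sum_apply, Finset.add_sum_erase s (f · x) his]

theorem tendsto_sum_atBot_of_tendsto_of_isBoundedUnder {ι α M : Type*} [AddCommGroup M]
    [PartialOrder M] [IsOrderedAddMonoid M] {l : Filter α} {s : Finset ι} {f : ι → α → M} {i : ι}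
    (his : i ∈ s) (hi : Tendsto (f i) l atBot)
    (hbdd : ∀ k ∈ s, k ≠ i → l.IsBoundedUnder (· ≤ ·) (f k)) :
    Tendsto (fun x => ∑ k ∈ s, f k x) l atBot :=
  tendsto_sum_atTop_of_tendsto_of_isBoundedUnder (M := Mᵒᵈ) his hi hbdd

section MonotoneOn

variable {α β : Type*} [LinearOrder α] [TopologicalSpace α] [OrderTopology α]
  [DenselyOrdered α] {a b : α}

theorem isBoundedUnder_ge_nhdsLT_of_monotoneOn [Preorder β] {f : α → β}
    (hf : MonotoneOn f (Ioo a b)) (hab : a < b) : (𝓝[<] b).IsBoundedUnder (· ≥ ·) f := by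
  obtain ⟨m, hm⟩ := exists_between hab
  refine isBoundedUnder_of_eventually_ge (a := f m) ?_
  filter_upwards [Ioo_mem_nhdsLT hm.2] with x hx
  exact hf hm ⟨hm.1.trans hx.1, hx.2⟩ hx.1.le

theorem isBoundedUnder_le_nhdsGT_of_monotoneOn [Preorder β] {f : α → β}
    (hf : MonotoneOn f (Ioo a b)) (hab : a < b) : (𝓝[>] a).IsBoundedUnder (· ≤ ·) f := by
  obtain ⟨m, hm⟩ := exists_between hab
  refine isBoundedUnder_of_eventually_le (a := f m) ?_
  filter_upwards [Ioo_mem_nhdsGT hm.1] with x hx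
  exact hf ⟨hx.1, hx.2.trans hm.2⟩ hm hx.2.le

end MonotoneOn

theorem existsUnique_mem_Ioo_sum_eq {ι α M : Type*} [Fintype ι]
    [ConditionallyCompleteLinearOrder α] [TopologicalSpace α] [OrderTopology α] [DenselyOrdered α]
    [AddCommGroup M] [LinearOrder M] [IsOrderedAddMonoid M] [TopologicalSpace M] [OrderTopology M]
    {f : ι → α → M} {a b : α} (hab : a < b) (hmono : ∀ k, StrictMonoOn (f k) (Ioo a b))
    (hcont : ∀ k, ContinuousOn (f k) (Ioo a b)) {i j : ι} (hi : Tendsto (f i) (𝓝[>] a) atBot)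
    (hj : Tendsto (f j) (𝓝[<] b) atTop) (c : M) :
    ∃! x, x ∈ Ioo a b ∧ ∑ k, f k x = c := by
  have hsum_mono : StrictMonoOn (fun x => ∑ k, f k x) (Ioo a b) := fun x hx y hy hxy =>
    Finset.sum_lt_sum_of_nonempty ⟨i, Finset.mem_univ i⟩ fun k _ => hmono k hx hy hxy
  have hbot : Tendsto (fun x => ∑ k, f k x) (𝓝[>] a) atBot :=
    tendsto_sum_atBot_of_tendsto_of_isBoundedUnder (Finset.mem_univ i) hi fun k _ _ =>
      isBoundedUnder_le_nhdsGT_of_monotoneOn (hmono k).monotoneOn hab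
  have htop : Tendsto (fun x => ∑ k, f k x) (𝓝[<] b) atTop :=
    tendsto_sum_atTop_of_tendsto_of_isBoundedUnder (Finset.mem_univ j) hj fun k _ _ =>
      isBoundedUnder_ge_nhdsLT_of_monotoneOn (hmono k).monotoneOn hab
  have hsurj : SurjOn (fun x => ∑ k, f k x) (Ioo a b) univ :=
    (continuousOn_finsetSum _ fun k _ => hcont k).surjOn_of_tendsto (nonempty_Ioo.2 hab)
      ((tendsto_comp_coe_Ioo_atBot hab).2 hbot) ((tendsto_comp_coe_Ioo_atTop hab).2 htop)
  obtain ⟨x, hx, hxc⟩ := hsurj (mem_univ c)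
  exact ⟨x, ⟨hx, hxc⟩, fun y hy => hsum_mono.injOn hy.1 hx (hy.2.trans hxc.symm)⟩

section CayleyCoord

/-- The Cayley transform of the rotated point `e^{i(x-t)}` of the unit circle, that is the real
number `-cot ((x - t) / 2)`. As a function of the angle `x` it increases from `-∞` to `+∞` between
consecutive poles `t` and `t + 2π`. It is written through `tan`, whose monotonicity and limits are
available, rather than through `cot`. -/
noncomputable def cayleyCoord (t x : ℝ) : ℝ := Real.tan ((x - t - π) / 2)

variable (t : ℝ)

theorem mapsTo_sub_sub_pi_div_two :
    MapsTo (fun x => (x - t - π) / 2) (Ioo t (t + 2 * π)) (Ioo (-(π / 2)) (π / 2)) :=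
  fun x hx => ⟨by linarith [hx.1], by linarith [hx.2]⟩

theorem strictMonoOn_cayleyCoord : StrictMonoOn (cayleyCoord t) (Ioo t (t + 2 * π)) :=
  fun x hx y hy hxy => Real.strictMonoOn_tan (mapsTo_sub_sub_pi_div_two t hx)
    (mapsTo_sub_sub_pi_div_two t hy) (by linarith)

theorem continuousOn_cayleyCoord : ContinuousOn (cayleyCoord t) (Ioo t (t + 2 * π)) :=
  Real.continuousOn_tan_Ioo.comp (by fun_prop) (mapsTo_sub_sub_pi_div_two t)

theorem tendsto_cayleyCoord_nhdsGT : Tendsto (cayleyCoord t) (𝓝[>] t) atBot := by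
  refine Real.tendsto_tan_neg_pi_div_two.comp (tendsto_nhdsWithin_iff.2 ⟨?_, ?_⟩)
  · exact (Continuous.tendsto' (by fun_prop) t _ (by ring)).mono_left nhdsWithin_le_nhds
  · filter_upwards [self_mem_nhdsWithin] with x (hx : t < x)
    exact mem_Ioi.2 (by linarith)

theorem tendsto_cayleyCoord_nhdsLT : Tendsto (cayleyCoord t) (𝓝[<] (t + 2 * π)) atTop := by
  refine Real.tendsto_tan_pi_div_two.comp (tendsto_nhdsWithin_iff.2 ⟨?_, ?_⟩)
  · exact (Continuous.tendsto' (by fun_prop) _ _ (by ring)).mono_left nhdsWithin_le_nhds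
  · filter_upwards [self_mem_nhdsWithin] with x (hx : x < t + 2 * π)
    exact mem_Iio.2 (by linarith)

variable {t}

theorem existsUnique_sum_mul_cayleyCoord_eq {ι : Type*} [Fintype ι] {ρ τ : ι → ℝ}
    (hρ : ∀ k, 0 < ρ k) {a b : ℝ} (hab : a < b) (ha : IsGreatest (range τ) a)
    (hb : IsLeast (range (τ · + 2 * π)) b) (c : ℝ) :
    ∃! x, x ∈ Ioo a b ∧ ∑ k, ρ k * cayleyCoord (τ k) x = c := by
  have hsub (k : ι) : Ioo a b ⊆ Ioo (τ k) (τ k + 2 * π) :=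
    Ioo_subset_Ioo (ha.2 (mem_range_self k)) (hb.2 (mem_range_self k))
  obtain ⟨i, rfl⟩ := ha.1
  obtain ⟨j, rfl⟩ := hb.1
  exact existsUnique_mem_Ioo_sum_eq (f := fun k x => ρ k * cayleyCoord (τ k) x) hab
    (fun k x hx y hy hxy => mul_lt_mul_of_pos_left
      (strictMonoOn_cayleyCoord (τ k) (hsub k hx) (hsub k hy) hxy) (hρ k))
    (fun k => continuousOn_const.mul ((continuousOn_cayleyCoord (τ k)).mono (hsub k)))
    ((tendsto_cayleyCoord_nhdsGT (τ i)).const_mul_atBot (hρ i))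
    ((tendsto_cayleyCoord_nhdsLT (τ j)).const_mul_atTop (hρ j)) c

theorem circleExp_add_div_circleExp_sub (x t : ℝ) :
    (Circle.exp x + Circle.exp t : ℂ) / (Circle.exp x - Circle.exp t) =
      Complex.I * cayleyCoord t x := by
  -- Both points are written relative to the midpoint `m` of the arc between them.
  set d : ℝ := (x - t) / 2 with hd
  set m : ℂ := ((Circle.exp ((x + t) / 2) : Circle) : ℂ) with hm
  have hx : (Circle.exp x : ℂ) = m * (Real.cos d + Real.sin d * Complex.I) := by
    rw [hm, Complex.ofReal_cos, Complex.ofReal_sin, ← Complex.exp_mul_I, ← Circle.coe_exp,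
      ← Circle.coe_mul, ← Circle.exp_add, hd]
    ring_nf
  have ht : (Circle.exp t : ℂ) = m * (Real.cos d - Real.sin d * Complex.I) := by
    rw [hm, sub_eq_add_neg, ← neg_mul, ← Complex.ofReal_neg, ← Real.sin_neg, ← Real.cos_neg,
      Complex.ofReal_cos, Complex.ofReal_sin, ← Complex.exp_mul_I, ← Circle.coe_exp,
      ← Circle.coe_mul, ← Circle.exp_add, hd]
    ring_nf
  have hsum : (Circle.exp x + Circle.exp t : ℂ) = 2 * m * Real.cos d := by rw [hx, ht]; ring
  have hdiff : (Circle.exp x - Circle.exp t : ℂ) = 2 * m * (Complex.I * Real.sin d) := by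
    rw [hx, ht]; ring
  have hcoord : cayleyCoord t x = -(Real.cos d / Real.sin d) := by
    rw [cayleyCoord, show (x - t - π) / 2 = d - π / 2 by ring, Real.tan_eq_sin_div_cos,
      Real.sin_sub_pi_div_two, Real.cos_sub_pi_div_two, neg_div]
  rw [hsum, hdiff, mul_div_mul_left _ _ (mul_ne_zero two_ne_zero (Circle.coe_ne_zero _)), hcoord,
    mul_comm Complex.I, ← div_div, Complex.div_I]
  push_cast
  ring

end CayleyCoord

theorem mul_transpose_of_eq_mul_diagonal_of_mulVec_eq_smul {ι R : Type*} [Fintype ι] [DecidableEq ι]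
    [CommSemiring R] {U : Matrix ι ι R} {φ : ι → ι → R} {d : ι → R}
    (h : ∀ k, U *ᵥ φ k = d k • φ k) : U * (of φ)ᵀ = (of φ)ᵀ * diagonal d := by
  ext i k
  rw [mul_diagonal, mul_comm]
  exact congrFun (h k) i

section Spectrum

variable {ι K : Type*} [Fintype ι] [DecidableEq ι] [Field K]

theorem mem_spectrum_iff_exists_mulVec_eq_smul {A : Matrix ι ι K} {μ : K} :
    μ ∈ spectrum K A ↔ ∃ w : ι → K, w ≠ 0 ∧ A *ᵥ w = μ • w := by
  rw [spectrum.mem_iff, isUnit_iff_isUnit_det, isUnit_iff_ne_zero, not_not,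
    ← exists_mulVec_eq_zero_iff]
  simp only [Algebra.algebraMap_eq_smul_one, sub_mulVec, smul_mulVec, one_mulVec, sub_eq_zero,
    eq_comm]

theorem mem_spectrum_diagonal_add_vecMulVec_iff {d : ι → K} {μ : K} (hμ : ∀ k, μ ≠ d k)
    (p q : ι → K) :
    μ ∈ spectrum K (diagonal d + vecMulVec p q) ↔ ∑ k, q k * (p k / (μ - d k)) = 1 := by
  have hne (k : ι) : μ - d k ≠ 0 := sub_ne_zero.2 (hμ k)
  have hfactor : algebraMap K (Matrix ι ι K) μ - (diagonal d + vecMulVec p q) =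
      diagonal (fun k => μ - d k) *
        (1 - replicateCol Unit (fun k => p k / (μ - d k)) * replicateRow Unit q) := by
    rw [← vecMulVec_eq]
    ext i j
    simp only [Algebra.algebraMap_eq_smul_one, diagonal_mul, Matrix.sub_apply, Matrix.add_apply,
      Matrix.smul_apply, diagonal_apply, one_apply, vecMulVec_apply, smul_eq_mul]
    split_ifs with h
    · subst h; field [hne i]
    · field [hne i]
  rw [spectrum.mem_iff, hfactor, isUnit_iff_isUnit_det, det_mul, det_diagonal, det_one_sub_mul_comm,
    det_unique, isUnit_iff_ne_zero, not_not, mul_eq_zero,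
    or_iff_right (Finset.prod_ne_zero_iff.2 fun k _ => hne k), Matrix.sub_apply, one_apply_eq,
    replicateRow_mul_replicateCol_apply, sub_eq_zero, eq_comm, dotProduct]

theorem notMem_spectrum_diagonal_add_vecMulVec {d p q : ι → K} (hd : Function.Injective d) {j : ι}
    (hp : p j ≠ 0) (hq : q j ≠ 0) : d j ∉ spectrum K (diagonal d + vecMulVec p q) := by
  rw [mem_spectrum_iff_exists_mulVec_eq_smul]
  rintro ⟨w, hw, h⟩
  have hcoord (k : ι) : (d j - d k) * w k = p k * (q ⬝ᵥ w) := by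
    have hk := congrFun h k
    simp only [add_mulVec, vecMulVec_mulVec, op_smul_eq_smul, Pi.add_apply, mulVec_diagonal,
      Pi.smul_apply, smul_eq_mul] at hk
    linear_combination -hk
  have hqw : q ⬝ᵥ w = 0 := by simpa [hp] using hcoord j
  have hsupp (k : ι) (hk : k ≠ j) : w k = 0 := by
    simpa [hqw, sub_eq_zero, hd.eq_iff, hk.symm] using hcoord k
  have hwj : w j = 0 := by
    rw [dotProduct, Finset.sum_eq_single_of_mem j (Finset.mem_univ j)
      fun k _ hk => by rw [hsupp k hk, mul_zero]] at hqw
    exact (mul_eq_zero.1 hqw).resolve_left hq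
  exact hw (funext fun k => if hk : k = j then hk ▸ hwj else hsupp k hk)

end Spectrum

section ComplexReflection

variable {ι R : Type*} [DecidableEq ι] [CommRing R] [StarRing R]

/-- The matrix `I + (η - 1) v v*`. If `v` is a unit vector and `η` has modulus one, this is the
complex reflection across `v` with angle `arg η`: it multiplies `v` by `η` and fixes the
orthogonal complement of `v`. -/
def complexReflection (v : ι → R) (η : R) : Matrix ι ι R :=
  1 + (η - 1) • vecMulVec v (star v)

variable [Fintype ι]

theorem star_mulVec_dotProduct_mulVec {P : Matrix ι ι R} (hP : P ∈ unitaryGroup ι R)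
    (v w : ι → R) : star (P *ᵥ v) ⬝ᵥ (P *ᵥ w) = star v ⬝ᵥ w := by
  rw [star_mulVec, ← dotProduct_mulVec, mulVec_mulVec, ← star_eq_conjTranspose,
    mem_unitaryGroup_iff'.1 hP, one_mulVec]

theorem complexReflection_mem_unitaryGroup {v : ι → R} (hv : star v ⬝ᵥ v = 1) {η : R}
    (hη : η * star η = 1) : complexReflection v η ∈ unitaryGroup ι R := by
  rw [mem_unitaryGroup_iff, complexReflection, star_eq_conjTranspose]
  simp only [conjTranspose_add, conjTranspose_one, conjTranspose_smul, conjTranspose_vecMulVec,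
    star_star, star_sub, star_one, add_mul, mul_add, one_mul, mul_one, smul_mul_smul_comm,
    vecMulVec_mul_vecMulVec, hv, one_smul]
  rw [add_assoc, add_eq_left, ← add_smul, ← add_smul]
  convert zero_smul R _
  linear_combination hη

theorem complexReflection_mulVec {P : Matrix ι ι R} (hP : P ∈ unitaryGroup ι R) (v : ι → R)
    (η : R) : complexReflection (P *ᵥ v) η = P * complexReflection v η * star P := by
  have hPP : P * Pᴴ = 1 := mem_unitaryGroup_iff.1 hP
  simp only [complexReflection, mul_add, add_mul, mul_one, hPP,
    mul_smul_comm, smul_mul_assoc, mul_vecMulVec, vecMulVec_mul, star_mulVec,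
    star_eq_conjTranspose]

theorem diagonal_mul_complexReflection (d v : ι → R) (η : R) :
    diagonal d * complexReflection v η =
      diagonal d + vecMulVec (fun k => (η - 1) * d k * v k) (star v) := by
  ext i j
  simp only [complexReflection, diagonal_mul, Matrix.add_apply,
    Matrix.smul_apply, vecMulVec_apply, smul_eq_mul, diagonal_apply, one_apply]
  split_ifs <;> ring

theorem spectrum_mul_complexReflection_eq {U P : Matrix ι ι R} (hP : P ∈ unitaryGroup ι R)
    {d : ι → R} (hUP : U * P = P * diagonal d) (v : ι → R) (η : R) :
    spectrum R (U * complexReflection v η) =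
      spectrum R (diagonal d * complexReflection (star P *ᵥ v) η) := by
  have hPv : P *ᵥ (star P *ᵥ v) = v := by
    rw [mulVec_mulVec, mem_unitaryGroup_iff.1 hP, one_mulVec]
  have hconj : U * complexReflection v η =
      P * (diagonal d * complexReflection (star P *ᵥ v) η) * star P := by
    conv_lhs => rw [← hPv, complexReflection_mulVec hP]
    simp only [← mul_assoc, hUP]
  rw [hconj]
  exact Unitary.spectrum_star_right_conjugate (U := ⟨P, hP⟩)

end ComplexReflection

section SecularEquation

variable {ι K : Type*} [Fintype ι] [DecidableEq ι] [Field K] [StarRing K]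

theorem mem_spectrum_diagonal_mul_complexReflection_iff [NeZero (2 : K)] {u v : ι → K}
    (hv : star v ⬝ᵥ v = 1) {η : K} (hη : η ≠ 1) {μ : K} (hμ : ∀ k, μ ≠ u k) :
    μ ∈ spectrum K (diagonal u * complexReflection v η) ↔
      ∑ k, star (v k) * v k * ((μ + u k) / (μ - u k)) = (η + 1) / (η - 1) := by
  have hη' : η - 1 ≠ 0 := sub_ne_zero.2 hη
  have hterm (k : ι) : star (v k) * v k * ((μ + u k) / (μ - u k)) = star (v k) * v k +
      2 / (η - 1) * (star (v k) * ((η - 1) * u k * v k / (μ - u k))) := by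
    have hk : μ - u k ≠ 0 := sub_ne_zero.2 (hμ k)
    field_simp
    ring
  have hrhs : (η + 1) / (η - 1) = 1 + 2 / (η - 1) * 1 := by
    field_simp
    ring
  have hnorm : ∑ k, star (v k) * v k = 1 := hv
  rw [diagonal_mul_complexReflection, mem_spectrum_diagonal_add_vecMulVec_iff hμ,
    Finset.sum_congr rfl fun k _ => hterm k, Finset.sum_add_distrib, hnorm, ← Finset.mul_sum, hrhs,
    add_right_inj, mul_right_inj' (div_ne_zero two_ne_zero hη')]
  rfl

theorem notMem_spectrum_diagonal_mul_complexReflection {u v : ι → K}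
    (hu : Function.Injective u) {j : ι} (huj : u j ≠ 0) (hvj : v j ≠ 0) {η : K} (hη : η ≠ 1) :
    u j ∉ spectrum K (diagonal u * complexReflection v η) := by
  rw [diagonal_mul_complexReflection]
  exact notMem_spectrum_diagonal_add_vecMulVec hu
    (mul_ne_zero (mul_ne_zero (sub_ne_zero.2 hη) huj) hvj) (star_ne_zero.2 hvj)

end SecularEquation

section CircleExp

theorem circle_mul_star_self (z : Circle) : (z : ℂ) * star (z : ℂ) = 1 := by
  rw [← starRingEnd_apply, Complex.mul_conj, Circle.normSq_coe, Complex.ofReal_one]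

theorem complex_exp_I_mul (x : ℝ) : Complex.exp (Complex.I * x) = Circle.exp x := by
  rw [mul_comm, Circle.coe_exp]

theorem circleExp_ne_of_mem_Ioo {x t : ℝ} (hx : x ∈ Ioo t (t + 2 * π)) :
    Circle.exp x ≠ Circle.exp t := fun h =>
  hx.1.ne' <| Circle.exp_injOn_Ico (by linarith) (Ioo_subset_Ico_self hx)
    (left_mem_Ico.2 (by linarith [Real.pi_pos])) h

theorem exists_mem_Ico_circleExp_eq {μ : ℂ} (hμ : ‖μ‖ = 1) (a : ℝ) :
    ∃ x ∈ Ico a (a + 2 * π), (Circle.exp x : ℂ) = μ := by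
  obtain ⟨y, hy⟩ := Circle.exp_surjective ⟨μ, mem_sphere_zero_iff_norm.2 hμ⟩
  obtain ⟨x, hx, hyx⟩ := Circle.periodic_exp.exists_mem_Ico Real.two_pi_pos y a
  exact ⟨x, hx, congrArg Subtype.val (hyx.symm.trans hy)⟩

theorem injective_circleExp_comp {ι : Type*} {τ : ι → ℝ} (hτ : Function.Injective τ)
    (hτ' : ∀ j k, τ k < τ j + 2 * π) : Function.Injective fun k => (Circle.exp (τ k) : ℂ) := by
  have hinj : InjOn Circle.exp (range τ) := by
    refine Circle.exp_injOn_of_forall_sub_mem_Ioo ?_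
    rintro _ ⟨j, rfl⟩ _ ⟨k, rfl⟩
    exact ⟨by linarith [hτ' j k], by linarith [hτ' k j]⟩
  exact fun j k h => hτ <|
    hinj (mem_range_self j) (mem_range_self k) (Circle.coe_injective h)

end CircleExp

section Angles

variable {n : ℕ} (θ : Fin n → ℝ)

/-- The angle following `θ j` in counterclockwise order around the circle: `θ (j + 1)`, or
`θ 0 + 2 * π` if `j` is the last index. -/
noncomputable def nextAngle (j : Fin n) : ℝ :=
  if h : (j : ℕ) + 1 < n then θ ⟨j + 1, h⟩ else θ ⟨0, j.pos⟩ + 2 * π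

/-- The representative modulo `2 * π` of the angle `θ k` which lies in `(θ j - 2 * π, θ j]`,
provided that `θ` is increasing and takes its values in a half-open interval of length `2 * π`. -/
noncomputable def angleLE (j k : Fin n) : ℝ :=
  if k ≤ j then θ k else θ k - 2 * π

@[simp]
theorem circleExp_angleLE (j k : Fin n) : Circle.exp (angleLE θ j k) = Circle.exp (θ k) := by
  rw [angleLE]
  split_ifs
  exacts [rfl, Circle.exp_sub_two_pi _]

theorem exists_mem_Ico_nextAngle (hn : 0 < n) {x : ℝ}
    (hx : x ∈ Ico (θ ⟨0, hn⟩) (θ ⟨0, hn⟩ + 2 * π)) : ∃ j, x ∈ Ico (θ j) (nextAngle θ j) := by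
  obtain ⟨j, hj, hmax⟩ := {k | θ k ≤ x}.toFinite.exists_maximal ⟨⟨0, hn⟩, hx.1⟩
  refine ⟨j, hj, ?_⟩
  rw [nextAngle]
  split_ifs with h
  · exact lt_of_not_ge fun hle =>
      (Nat.lt_succ_self j).not_ge (hmax hle (Fin.mk_le_mk.2 (Nat.le_succ j)))
  · exact hx.2

variable {θ}

theorem lt_nextAngle (hθ : StrictMono θ) (hθ' : ∀ j k, θ k < θ j + 2 * π) (j : Fin n) :
    θ j < nextAngle θ j := by
  rw [nextAngle]
  split_ifs with h
  exacts [hθ (Nat.lt_succ_self j), hθ' _ j]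

theorem isGreatest_range_angleLE (hθ : Monotone θ) (hθ' : ∀ j k, θ k < θ j + 2 * π) (j : Fin n) :
    IsGreatest (range (angleLE θ j)) (θ j) := by
  refine ⟨⟨j, if_pos le_rfl⟩, forall_mem_range.2 fun k => ?_⟩
  rw [angleLE]
  split_ifs with hk
  exacts [hθ hk, by linarith [hθ' j k]]

theorem isLeast_range_angleLE_add_two_pi (hθ : Monotone θ) (hθ' : ∀ j k, θ k < θ j + 2 * π)
    (j : Fin n) : IsLeast (range (angleLE θ j · + 2 * π)) (nextAngle θ j) := by
  have hle (k : Fin n) : nextAngle θ j ≤ angleLE θ j k + 2 * π := by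
    rw [nextAngle, angleLE]
    split_ifs with h hk hk
    · exact (hθ' k _).le
    · simpa using hθ (Fin.mk_le_of_le_val (not_le.1 hk))
    · simpa using hθ (Fin.mk_le_of_le_val k.val.zero_le)
    · omega
  refine ⟨?_, forall_mem_range.2 hle⟩
  rw [nextAngle]
  split_ifs with h
  · exact ⟨⟨j + 1, h⟩, by simp [angleLE, Fin.le_def]⟩
  · exact ⟨⟨0, j.pos⟩, by simp [angleLE, Fin.le_def]⟩

theorem Ioo_nextAngle_subset (hθ : Monotone θ) (hθ' : ∀ j k, θ k < θ j + 2 * π) (j k : Fin n) :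
    Ioo (θ j) (nextAngle θ j) ⊆ Ioo (angleLE θ j k) (angleLE θ j k + 2 * π) :=
  Ioo_subset_Ioo ((isGreatest_range_angleLE hθ hθ' j).2 (mem_range_self k))
    ((isLeast_range_angleLE_add_two_pi hθ hθ' j).2 (mem_range_self k))

end Angles

section CircleSpectrum

variable {ι : Type*} [Fintype ι] [DecidableEq ι]

theorem circleExp_mem_spectrum_diagonal_mul_complexReflection_iff {τ : ι → ℝ} {a : ι → ℂ}
    (ha : star a ⬝ᵥ a = 1) {α x : ℝ} (hα : (Circle.exp α : ℂ) ≠ 1)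
    (hx : ∀ k, Circle.exp x ≠ Circle.exp (τ k)) :
    (Circle.exp x : ℂ) ∈ spectrum ℂ (diagonal (fun k => (Circle.exp (τ k) : ℂ)) *
        complexReflection a (Circle.exp α)) ↔
      ∑ k, ‖a k‖ ^ 2 * cayleyCoord (τ k) x = cayleyCoord 0 α := by
  have hterm (k : ι) : star (a k) * a k *
      ((Circle.exp x + Circle.exp (τ k)) / (Circle.exp x - Circle.exp (τ k))) =
        Complex.I * ((‖a k‖ ^ 2 * cayleyCoord (τ k) x : ℝ) : ℂ) := by
    rw [circleExp_add_div_circleExp_sub, ← starRingEnd_apply, Complex.conj_mul']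
    push_cast
    ring
  have hrhs : ((Circle.exp α : ℂ) + 1) / (Circle.exp α - 1) = Complex.I * cayleyCoord 0 α := by
    simpa using circleExp_add_div_circleExp_sub α 0
  rw [mem_spectrum_diagonal_mul_complexReflection_iff ha hα
    fun k => Circle.coe_injective.ne (hx k), hrhs, Finset.sum_congr rfl fun k _ => hterm k,
    ← Finset.mul_sum, mul_right_inj' Complex.I_ne_zero]
  norm_cast

open scoped Matrix.Norms.L2Operator in
theorem norm_eq_one_of_mem_spectrum_of_mem_unitaryGroup {A : Matrix ι ι ℂ}
    (hA : A ∈ unitaryGroup ι ℂ) {μ : ℂ} (hμ : μ ∈ spectrum ℂ A) : ‖μ‖ = 1 :=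
  spectrum.norm_eq_one_of_unitary hA hμ

theorem diagonal_circle_mem_unitaryGroup (u : ι → Circle) :
    diagonal (fun k => (u k : ℂ)) ∈ unitaryGroup ι ℂ := by
  rw [mem_unitaryGroup_iff, star_eq_conjTranspose, diagonal_conjTranspose, diagonal_mul_diagonal,
    ← diagonal_one]
  congr 1 with k
  exact circle_mul_star_self (u k)

end CircleSpectrum

section Interlacing

variable {n : ℕ} {θ : Fin n → ℝ} {a : Fin n → ℂ} {α : ℝ}

theorem existsUnique_circleExp_mem_spectrum_diagonal_mul_complexReflection (hθ : StrictMono θ)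
    (hθ' : ∀ j k, θ k < θ j + 2 * π) (ha : star a ⬝ᵥ a = 1) (ha' : ∀ k, a k ≠ 0)
    (hα : (Circle.exp α : ℂ) ≠ 1) (j : Fin n) :
    ∃! x, x ∈ Ioo (θ j) (nextAngle θ j) ∧
      (Circle.exp x : ℂ) ∈ spectrum ℂ (diagonal (fun k => (Circle.exp (θ k) : ℂ)) *
        complexReflection a (Circle.exp α)) := by
  have hsecular {x : ℝ} (hx : x ∈ Ioo (θ j) (nextAngle θ j)) :=
    circleExp_mem_spectrum_diagonal_mul_complexReflection_iff (τ := angleLE θ j) ha hα fun k =>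
      circleExp_ne_of_mem_Ioo (Ioo_nextAngle_subset hθ.monotone hθ' j k hx)
  simp only [circleExp_angleLE] at hsecular
  rw [existsUnique_congr fun x => and_congr_right hsecular]
  exact existsUnique_sum_mul_cayleyCoord_eq (fun k => by simpa [sq_pos_iff] using ha' k)
    (lt_nextAngle hθ hθ' j) (isGreatest_range_angleLE hθ.monotone hθ' j)
    (isLeast_range_angleLE_add_two_pi hθ.monotone hθ' j) _

theorem exists_circleExp_eq_of_mem_spectrum_diagonal_mul_complexReflection (hn : 0 < n)
    (hθ : StrictMono θ) (hθ' : ∀ j k, θ k < θ j + 2 * π) (ha : star a ⬝ᵥ a = 1) (ha' : ∀ k, a k ≠ 0)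
    (hα : (Circle.exp α : ℂ) ≠ 1) {μ : ℂ}
    (hμ : μ ∈ spectrum ℂ (diagonal (fun k => (Circle.exp (θ k) : ℂ)) *
      complexReflection a (Circle.exp α))) :
    ∃ j, ∃ x ∈ Ioo (θ j) (nextAngle θ j), μ = Circle.exp x := by
  have hunit : diagonal (fun k => (Circle.exp (θ k) : ℂ)) * complexReflection a (Circle.exp α) ∈
      unitaryGroup (Fin n) ℂ :=
    mul_mem (diagonal_circle_mem_unitaryGroup _)
      (complexReflection_mem_unitaryGroup ha (circle_mul_star_self _))
  obtain ⟨x, hx, rfl⟩ := exists_mem_Ico_circleExp_eq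
    (norm_eq_one_of_mem_spectrum_of_mem_unitaryGroup hunit hμ) (θ ⟨0, hn⟩)
  obtain ⟨j, hj⟩ := exists_mem_Ico_nextAngle θ hn hx
  refine ⟨j, x, ⟨lt_of_le_of_ne hj.1 ?_, hj.2⟩, rfl⟩
  rintro rfl
  exact notMem_spectrum_diagonal_mul_complexReflection (injective_circleExp_comp hθ.injective hθ')
    (Circle.coe_ne_zero _) (ha' j) hα hμ

end Interlacing

/-- Strict interlacing on the unit circle of the eigenvalues of `U (I + (η-1) v v*)`
with those of `U`: there is exactly one eigenvalue `e^{ix}` with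
`x ∈ (θ_j, θ_{j+1})` for each `j` (convention `θ_{n+1} = θ_1 + 2π`), and these are
all the eigenvalues. -/
theorem reflection_eigenvalue_interlacing
    (n : ℕ) (hn : 0 < n)
    (U : Matrix (Fin n) (Fin n) ℂ) (hU : U ∈ Matrix.unitaryGroup (Fin n) ℂ)
    (θ : Fin n → ℝ) (hθmono : StrictMono θ)
    (hθ2π : ∀ j, θ j < θ ⟨0, hn⟩ + 2 * Real.pi)
    (φ : Fin n → Fin n → ℂ)
    (hortho : ∀ j k, (∑ i, (starRingEnd ℂ) (φ j i) * φ k i) = if j = k then 1 else 0)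
    (heig : ∀ j, U.mulVec (φ j) = Complex.exp (Complex.I * (θ j : ℂ)) • φ j)
    (v : Fin n → ℂ) (hv : (∑ i, (starRingEnd ℂ) (v i) * v i) = 1)
    (hρ : ∀ j, (∑ i, (starRingEnd ℂ) (φ j i) * v i) ≠ 0)
    (η : ℂ) (hη : ‖η‖ = 1) (hη1 : η ≠ 1) :
    (∀ j : Fin n, ∃! x : ℝ,
        x ∈ Set.Ioo (θ j)
          (if h : (j : ℕ) + 1 < n then θ ⟨(j : ℕ) + 1, h⟩ else θ ⟨0, hn⟩ + 2 * Real.pi) ∧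
        ∃ w : Fin n → ℂ, w ≠ 0 ∧
          (U * (1 + (η - 1) • Matrix.vecMulVec v (fun i => (starRingEnd ℂ) (v i)))).mulVec w
            = Complex.exp (Complex.I * (x : ℂ)) • w)
    ∧ (∀ μ : ℂ,
        (∃ w : Fin n → ℂ, w ≠ 0 ∧
          (U * (1 + (η - 1) • Matrix.vecMulVec v (fun i => (starRingEnd ℂ) (v i)))).mulVec w
            = μ • w) →
        ∃ j : Fin n, ∃ x ∈ Set.Ioo (θ j)
            (if h : (j : ℕ) + 1 < n then θ ⟨(j : ℕ) + 1, h⟩ else θ ⟨0, hn⟩ + 2 * Real.pi),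
          μ = Complex.exp (Complex.I * (x : ℂ))) := by
  have hθ' (j k : Fin n) : θ k < θ j + 2 * π := by
    linarith [hθ2π k, hθmono.monotone (Fin.mk_le_of_le_val j.val.zero_le : ⟨0, hn⟩ ≤ j)]
  obtain ⟨α, rfl⟩ := (Complex.norm_eq_one_iff η).1 hη
  simp only [complex_exp_I_mul] at heig ⊢
  set P : Matrix (Fin n) (Fin n) ℂ := (Matrix.of φ)ᵀ
  have hP : P ∈ unitaryGroup (Fin n) ℂ :=
    mem_unitaryGroup_iff'.2 (Matrix.ext fun j k => (hortho j k).trans one_apply.symm)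
  set a : Fin n → ℂ := star P *ᵥ v
  have ha : star a ⬝ᵥ a = 1 := (star_mulVec_dotProduct_mulVec (Unitary.star_mem hP) v v).trans hv
  have ha' (k : Fin n) : a k ≠ 0 := hρ k
  have hspec (μ : ℂ) : (∃ w : Fin n → ℂ, w ≠ 0 ∧
      (U * complexReflection v (Circle.exp α)) *ᵥ w = μ • w) ↔
      μ ∈ spectrum ℂ (diagonal (fun k => (Circle.exp (θ k) : ℂ)) *
        complexReflection a (Circle.exp α)) := by
    rw [← mem_spectrum_iff_exists_mulVec_eq_smul,
      spectrum_mul_complexReflection_eq hP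
        (mul_transpose_of_eq_mul_diagonal_of_mulVec_eq_smul heig)]
  exact ⟨fun j => (existsUnique_congr fun x => and_congr_right' (hspec _)).2
      (existsUnique_circleExp_mem_spectrum_diagonal_mul_complexReflection hθmono hθ' ha ha' hη1 j),
    fun μ hμ => exists_circleExp_eq_of_mem_spectrum_diagonal_mul_complexReflection
      hn hθmono hθ' ha ha' hη1 ((hspec μ).1 hμ)⟩
end

section
/- Assume that for all a, b ∈ ℝ one has Λ([0, x+a]) − Λ([−x+b, 0]) = O(x/log²x) as x → ∞. Then for every z ∈ ℂ∖L there exists S_Λ(z) ∈ ℂ such that Σ_{λ ∈ L ∩ [−c,c]} γ_λ/(λ − z) converges to S_Λ(z) as c → ∞. -/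
open Filter Set Asymptotics Topology

/-!
Let `F c` be the integral of `(t - z)⁻¹` over `[-c, c]` and `D c = Λ([0, c]) - Λ([-c, 0])`, which is
the integral of `sign t` over `[-c, c]`. On the shell `n < |t| ≤ n + 1` the kernel `(t - z)⁻¹` is
`sign t / (n + 1) + O(1 / n²)`, so `F (n + 1) - F n` is `(D (n + 1) - D n) / (n + 1)` up to
`O(1 / n²)` times the mass of the shell. Partial summation turns the main term into the increment of
`D n / n` plus `D n / (n (n + 1))`. The hypothesis with `a = b = 0` makes `D n = O(n / log² n)`, and
comparison with `a = 1` gives the same bound for the mass of the shell. Since `∑ 1 / (n log² n)`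
converges, so does `F` along the integers; the mass bound then controls `F` between consecutive
integers.
-/

open MeasureTheory

section PointMeasure

variable {α : Type*} [MeasurableSpace α]

/-- The point measure `∑_{l ∈ L} γ_l δ_l`. Negative weights are truncated to `0`. -/
noncomputable def pointMeasure (L : Set α) (γ : α → ℝ) : Measure α :=
  Measure.sum fun l : L => ENNReal.ofReal (γ l) • Measure.dirac (l : α)

variable [MeasurableSingletonClass α] {L s : Set α} {γ : α → ℝ}

theorem pointMeasure_restrict (hs : MeasurableSet s) :
    (pointMeasure L γ).restrict s = pointMeasure (L ∩ s) γ := by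
  ext t ht
  simp only [pointMeasure, Measure.restrict_apply ht, Measure.sum_apply _ ht,
    Measure.sum_apply _ (ht.inter hs), Measure.smul_apply, Measure.dirac_apply]
  rw [tsum_subtype L fun l => ENNReal.ofReal (γ l) • (t ∩ s).indicator 1 l,
    tsum_subtype (L ∩ s) fun l => ENNReal.ofReal (γ l) • t.indicator 1 l]
  refine tsum_congr fun l => ?_
  by_cases hL : l ∈ L <;> by_cases ht : l ∈ t <;> by_cases hs : l ∈ s <;> simp [hL, ht, hs]

variable {E : Type*} [NormedAddCommGroup E]

theorem integrableOn_pointMeasure (hs : MeasurableSet s) (hfin : (L ∩ s).Finite) (f : α → E) :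
    IntegrableOn f s (pointMeasure L γ) := by
  have := hfin.to_subtype
  rw [IntegrableOn, pointMeasure_restrict hs]
  exact integrable_sum_dirac (fun _ => ENNReal.ofReal_ne_top) .of_finite

theorem setIntegral_pointMeasure [NormedSpace ℝ E] [CompleteSpace E] (hγ : ∀ l ∈ L, 0 ≤ γ l)
    (hs : MeasurableSet s) (hfin : (L ∩ s).Finite) (f : α → E) :
    ∫ x in s, f x ∂pointMeasure L γ = ∑' l : ↥(L ∩ s), γ l • f l := by
  have := hfin.to_subtype
  rw [pointMeasure_restrict hs, pointMeasure,
    integral_sum_dirac_eq_tsum (fun _ => ENNReal.ofReal_ne_top) .of_finite]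
  exact tsum_congr fun l => by rw [ENNReal.toReal_ofReal (hγ l l.2.1)]

theorem measureReal_pointMeasure (hγ : ∀ l ∈ L, 0 ≤ γ l) (hs : MeasurableSet s)
    (hfin : (L ∩ s).Finite) : (pointMeasure L γ).real s = ∑' l : ↥(L ∩ s), γ l := by
  simpa using setIntegral_pointMeasure hγ hs hfin fun _ => (1 : ℝ)

theorem locallyIntegrable_pointMeasure {L : Set ℝ} {γ : ℝ → ℝ}
    (hL : ∀ a b : ℝ, (L ∩ Icc a b).Finite) (f : ℝ → E) :
    LocallyIntegrable f (pointMeasure L γ) := fun x =>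
  ⟨Icc (x - 1) (x + 1), Icc_mem_nhds (by simp) (by simp),
    integrableOn_pointMeasure measurableSet_Icc (hL _ _) f⟩

theorem isLocallyFiniteMeasure_pointMeasure {L : Set ℝ} {γ : ℝ → ℝ}
    (hL : ∀ a b : ℝ, (L ∩ Icc a b).Finite) : IsLocallyFiniteMeasure (pointMeasure L γ) where
  finiteAtNhds x := by
    obtain ⟨s, hs, hint⟩ := locallyIntegrable_pointMeasure (γ := γ) hL (fun _ => (1 : ℝ)) x
    exact ⟨s, hs, ((integrableOn_const_iff (by simp)).mp hint).resolve_left (by simp)⟩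

end PointMeasure

theorem tendsto_div_log_sq_div_self :
    Tendsto (fun x : ℝ => x / Real.log x ^ 2 / x) atTop (𝓝 0) := by
  have h : Tendsto (fun x : ℝ => (Real.log x ^ 2)⁻¹) atTop (𝓝 0) :=
    ((tendsto_pow_atTop two_ne_zero).comp Real.tendsto_log_atTop).inv_tendsto_atTop
  refine h.congr' ?_
  filter_upwards [eventually_ne_atTop 0] with x hx
  field_simp

theorem summable_inv_mul_log_sq : Summable fun n : ℕ => ((n : ℝ) * Real.log n ^ 2)⁻¹ := by
  rw [← summable_condensed_iff_of_eventually_nonneg]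
  · refine ((Real.summable_nat_pow_inv.mpr one_lt_two).mul_left (Real.log 2 ^ 2)⁻¹).congr
      fun k => ?_
    push_cast
    rw [Real.log_pow]
    field_simp
  · exact .of_forall fun n => by positivity
  · filter_upwards [eventually_ge_atTop 2] with n hn
    have hlog : 0 < Real.log n := Real.log_pos (by exact_mod_cast hn)
    gcongr <;> simp

theorem summable_div_log_sq_div_sq :
    Summable fun n : ℕ => (n : ℝ) / Real.log n ^ 2 / (n : ℝ) ^ 2 :=
  summable_inv_mul_log_sq.congr fun n => by
    rcases eq_or_ne n 0 with rfl | hn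
    · simp
    · field_simp

theorem isBigO_add_one_div_log_sq :
    (fun x : ℝ => (x + 1) / Real.log (x + 1) ^ 2) =O[atTop] fun x => x / Real.log x ^ 2 := by
  refine .of_bound 2 ?_
  filter_upwards [eventually_gt_atTop 1] with x hx
  have hlog : 0 < Real.log x := Real.log_pos hx
  rw [Real.norm_of_nonneg (by positivity), Real.norm_of_nonneg (by positivity), ← mul_div_assoc]
  gcongr <;> linarith

theorem exists_tendsto_of_summable_sub {E : Type*} [AddCommGroup E] [TopologicalSpace E]
    [ContinuousAdd E] {G : ℕ → E} (h : Summable fun n => G (n + 1) - G n) :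
    ∃ S, Tendsto G atTop (𝓝 S) := by
  obtain ⟨s, hs⟩ := h
  refine ⟨s + G 0, ?_⟩
  simpa only [Finset.sum_range_sub, sub_add_cancel] using hs.tendsto_sum_nat.add_const (G 0)

theorem eventually_natCast_pos_and_ge (a : ℝ) : ∀ᶠ n : ℕ in atTop, (0 : ℝ) < n ∧ a ≤ n :=
  tendsto_natCast_atTop_atTop.eventually ((eventually_gt_atTop 0).and (eventually_ge_atTop a))

theorem norm_inv_ofReal_sub_le {z : ℂ} {c t : ℝ} (hc : 0 < c) (hz : 2 * ‖z‖ ≤ c) (ht : c ≤ |t|) :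
    ‖((t : ℂ) - z)⁻¹‖ ≤ 2 / c := by
  have hsub : |t| - ‖z‖ ≤ ‖(t : ℂ) - z‖ := by simpa using norm_sub_norm_le (t : ℂ) z
  rw [norm_inv, ← inv_div]
  gcongr
  linarith

theorem real_sign_mul_self (t : ℝ) : t.sign * t = |t| := by
  rcases lt_trichotomy t 0 with h | rfl | h
  · rw [abs_of_neg h, Real.sign_of_neg h, neg_one_mul]
  · simp
  · rw [abs_of_pos h, Real.sign_of_pos h, one_mul]

theorem norm_inv_ofReal_sub_sub_sign_div_le {z : ℂ} {c d t : ℝ} (hc : 0 < c) (hz : 2 * ‖z‖ ≤ c)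
    (hct : c ≤ |t|) (htd : |t| ≤ d) :
    ‖((t : ℂ) - z)⁻¹ - ((t.sign / d : ℝ) : ℂ)‖ ≤ 2 * (d - c + ‖z‖) / (c * d) := by
  have hd : 0 < d := by linarith
  have hsub : (t : ℂ) - z ≠ 0 := fun h => by
    have : |t| = ‖z‖ := by simpa using congrArg norm (sub_eq_zero.mp h)
    linarith
  have ht : t ≠ 0 := abs_pos.mp (hc.trans_le hct)
  have hsign : |t.sign| = 1 := by rcases t.sign_apply_eq_of_ne_zero ht with h | h <;> simp [h]
  have hdc : ‖((d - |t| : ℝ) : ℂ)‖ ≤ d - c := by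
    rw [Complex.norm_real, Real.norm_of_nonneg (by linarith)]
    linarith
  calc ‖((t : ℂ) - z)⁻¹ - ((t.sign / d : ℝ) : ℂ)‖
      = ‖(((d - |t| : ℝ) : ℂ) + t.sign * z) * ((t : ℂ) - z)⁻¹ / d‖ := by
        have hdC : (d : ℂ) ≠ 0 := mod_cast hd.ne'
        rw [← real_sign_mul_self]
        push_cast
        congr 1
        field_simp
        ring
    _ ≤ (d - c + ‖z‖) * (2 / c) / d := by
        rw [norm_div, norm_mul, Complex.norm_real d, Real.norm_of_nonneg hd.le]
        gcongr
        · linarith [norm_nonneg ((d - |t| : ℝ) : ℂ), norm_nonneg z]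
        · refine (norm_add_le _ _).trans (add_le_add hdc ?_)
          rw [norm_mul, Complex.norm_real, Real.norm_eq_abs, hsign, one_mul]
        · exact norm_inv_ofReal_sub_le hc hz hct
    _ = 2 * (d - c + ‖z‖) / (c * d) := by field_simp

section LocallyFinite

variable {μ : Measure ℝ}

/-- The net mass `μ([0, c]) - μ([-c, 0])`, measuring the asymmetry of `μ` on `[-c, c]`. An atom at
the origin is counted on both sides and cancels. -/
noncomputable def netMass (μ : Measure ℝ) (c : ℝ) : ℝ :=
  μ.real (Icc 0 c) - μ.real (Icc (-c) 0)

/-- The mass `μ([-c, c])`, whose increments are the masses of the shells `c < |t| ≤ d`. -/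
noncomputable def symmMass (μ : Measure ℝ) (c : ℝ) : ℝ :=
  μ.real (Icc (-c) c)

/-- The Stieltjes transform of the truncation of `μ` to `[-c, c]`; its limit as `c → ∞` is the
principal-value Stieltjes transform of `μ`. -/
noncomputable def truncatedStieltjes (μ : Measure ℝ) (z : ℂ) (c : ℝ) : ℂ :=
  ∫ t in Icc (-c) c, ((t : ℂ) - z)⁻¹ ∂μ

variable [IsLocallyFiniteMeasure μ]

theorem symmMass_mono : Monotone (symmMass μ) := fun _ _ hcd =>
  measureReal_mono (Icc_subset_Icc (neg_le_neg hcd) hcd) measure_Icc_lt_top.ne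

theorem symmMass_add_measureReal_singleton_zero {c : ℝ} (hc : 0 ≤ c) :
    symmMass μ c + μ.real {0} = μ.real (Icc 0 c) + μ.real (Icc (-c) 0) := by
  have hc' : -c ≤ 0 := neg_nonpos.mpr hc
  rw [symmMass, ← Icc_union_Icc_eq_Icc hc' hc, ← Icc_inter_Icc_eq_singleton hc' hc,
    measureReal_union_add_inter measurableSet_Icc measure_Icc_lt_top.ne measure_Icc_lt_top.ne,
    add_comm]

theorem symmMass_sub_eq {c d : ℝ} (hc : 0 ≤ c) (hd : 0 ≤ d) :
    symmMass μ d - symmMass μ c =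
      2 * (μ.real (Icc 0 d) - μ.real (Icc (-c) 0)) - netMass μ d - netMass μ c := by
  rw [netMass, netMass]
  linarith [symmMass_add_measureReal_singleton_zero (μ := μ) hc,
    symmMass_add_measureReal_singleton_zero (μ := μ) hd]

theorem real_sign_eq_indicator_Ici_sub_indicator_Iic :
    Real.sign = fun t => (Ici 0).indicator 1 t - (Iic 0).indicator 1 t := by
  funext t
  rcases lt_trichotomy t 0 with h | rfl | h
  · simp [Real.sign_of_neg h, h.le, h.not_ge]
  · simp
  · simp [Real.sign_of_pos h, h.le, h.not_ge]

theorem locallyIntegrable_sign : LocallyIntegrable Real.sign μ := by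
  rw [real_sign_eq_indicator_Ici_sub_indicator_Iic]
  exact ((locallyIntegrable_const 1).indicator measurableSet_Ici).sub
    ((locallyIntegrable_const 1).indicator measurableSet_Iic)

theorem setIntegral_sign_Icc_neg (c : ℝ) : ∫ t in Icc (-c) c, t.sign ∂μ = netMass μ c := by
  rw [real_sign_eq_indicator_Ici_sub_indicator_Iic]
  have hint : IntegrableOn (1 : ℝ → ℝ) (Icc (-c) c) μ :=
    (locallyIntegrable_const 1).integrableOn_isCompact isCompact_Icc
  rw [integral_sub (hint.indicator measurableSet_Ici) (hint.indicator measurableSet_Iic),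
    setIntegral_indicator measurableSet_Ici, setIntegral_indicator measurableSet_Iic]
  have hIci : Icc (-c) c ∩ Ici 0 = Icc 0 c := by
    ext
    simp only [mem_inter_iff, mem_Icc, mem_Ici]
    grind
  have hIic : Icc (-c) c ∩ Iic 0 = Icc (-c) 0 := by
    ext
    simp only [mem_inter_iff, mem_Icc, mem_Iic]
    grind
  simp [hIci, hIic, netMass]

theorem norm_setIntegral_Icc_neg_sub_le {E : Type*} [NormedAddCommGroup E] [NormedSpace ℝ E]
    {f : ℝ → E} (hf : LocallyIntegrable f μ) {c d C : ℝ} (hcd : c ≤ d)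
    (hC : ∀ t, c ≤ |t| → |t| ≤ d → ‖f t‖ ≤ C) :
    ‖∫ t in Icc (-d) d, f t ∂μ - ∫ t in Icc (-c) c, f t ∂μ‖ ≤
      C * (symmMass μ d - symmMass μ c) := by
  have hsub : Icc (-c) c ⊆ Icc (-d) d := Icc_subset_Icc (neg_le_neg hcd) hcd
  rw [← setIntegral_sdiff measurableSet_Icc (hf.integrableOn_isCompact isCompact_Icc) hsub,
    symmMass, symmMass, ← measureReal_sdiff hsub measurableSet_Icc measure_Icc_lt_top.ne]
  refine norm_setIntegral_le_of_norm_le_const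
    (measure_lt_top_of_subset sdiff_subset measure_Icc_lt_top.ne) fun t ⟨htd, htc⟩ => ?_
  rw [mem_Icc, ← abs_le] at htd htc
  exact hC t (not_le.mp htc).le htd

variable {z : ℂ}

theorem norm_truncatedStieltjes_sub_le
    (hz : LocallyIntegrable (fun t : ℝ => ((t : ℂ) - z)⁻¹) μ)
    {c d : ℝ} (hc : 0 < c) (hzc : 2 * ‖z‖ ≤ c) (hcd : c ≤ d) :
    ‖truncatedStieltjes μ z d - truncatedStieltjes μ z c‖ ≤
      2 / c * (symmMass μ d - symmMass μ c) :=
  norm_setIntegral_Icc_neg_sub_le hz hcd fun _ hct _ => norm_inv_ofReal_sub_le hc hzc hct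

theorem norm_truncatedStieltjes_sub_sub_netMass_le
    (hz : LocallyIntegrable (fun t : ℝ => ((t : ℂ) - z)⁻¹) μ)
    {c d : ℝ} (hc : 0 < c) (hzc : 2 * ‖z‖ ≤ c) (hcd : c ≤ d) :
    ‖truncatedStieltjes μ z d - truncatedStieltjes μ z c -
        (((netMass μ d - netMass μ c) / d : ℝ) : ℂ)‖ ≤
      2 * (d - c + ‖z‖) / (c * d) * (symmMass μ d - symmMass μ c) := by
  have hsign : LocallyIntegrable (fun t : ℝ => ((t.sign / d : ℝ) : ℂ)) μ :=
    locallyIntegrable_iff.mpr fun K hK =>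
      ((locallyIntegrable_sign.integrableOn_isCompact hK).div_const d).ofReal
  have hsplit (e : ℝ) : ∫ t in Icc (-e) e, (((t : ℂ) - z)⁻¹ - ((t.sign / d : ℝ) : ℂ)) ∂μ =
      truncatedStieltjes μ z e - ((netMass μ e / d : ℝ) : ℂ) := by
    rw [integral_sub (hz.integrableOn_isCompact isCompact_Icc)
      (hsign.integrableOn_isCompact isCompact_Icc), integral_complex_ofReal, integral_div,
      setIntegral_sign_Icc_neg, truncatedStieltjes]
  have hbound := norm_setIntegral_Icc_neg_sub_le (hz.sub hsign) hcd
    fun _ hct htd => norm_inv_ofReal_sub_sub_sign_div_le hc hzc hct htd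
  simp only [Pi.sub_apply, hsplit] at hbound
  refine (congrArg norm ?_).trans_le hbound
  push_cast
  ring

variable {g : ℕ → ℝ}

theorem isBigO_truncatedStieltjes_increment_sub
    (hmass : (fun n : ℕ => symmMass μ (n + 1) - symmMass μ n) =O[atTop] g)
    (hz : LocallyIntegrable (fun t : ℝ => ((t : ℂ) - z)⁻¹) μ) :
    (fun n : ℕ => truncatedStieltjes μ z (n + 1) - truncatedStieltjes μ z n -
      (((netMass μ (n + 1) - netMass μ n) / (n + 1) : ℝ) : ℂ))
      =O[atTop] fun n => g n / (n : ℝ) ^ 2 := by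
  refine .trans (.of_bound (2 * (1 + ‖z‖)) ?_)
    (hmass.mul (isBigO_refl (fun n : ℕ => ((n : ℝ) ^ 2)⁻¹) _))
  filter_upwards [eventually_natCast_pos_and_ge (2 * ‖z‖)] with n ⟨hn, hzn⟩
  have hle : (n : ℝ) ≤ n + 1 := by linarith
  have hmono : 0 ≤ symmMass μ (n + 1) - symmMass μ n := sub_nonneg.mpr (symmMass_mono hle)
  calc _ ≤ 2 * ((n + 1 : ℝ) - n + ‖z‖) / (n * (n + 1)) *
          (symmMass μ (n + 1) - symmMass μ n) :=
        norm_truncatedStieltjes_sub_sub_netMass_le hz hn hzn hle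
    _ ≤ 2 * (1 + ‖z‖) / (n * n) * (symmMass μ (n + 1) - symmMass μ n) := by
        rw [add_sub_cancel_left]
        gcongr
    _ = _ := by
        rw [Real.norm_of_nonneg (by positivity)]
        ring

theorem isBigO_truncatedStieltjes_sub_netMass_div_increment
    (hnet : (fun n : ℕ => netMass μ n) =O[atTop] g)
    (hmass : (fun n : ℕ => symmMass μ (n + 1) - symmMass μ n) =O[atTop] g)
    (hz : LocallyIntegrable (fun t : ℝ => ((t : ℂ) - z)⁻¹) μ) :
    (fun n : ℕ =>
      (truncatedStieltjes μ z (n + 1) - ((netMass μ (n + 1) / (n + 1) : ℝ) : ℂ)) -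
        (truncatedStieltjes μ z n - ((netMass μ n / n : ℝ) : ℂ)))
      =O[atTop] fun n => g n / (n : ℝ) ^ 2 := by
  have hnet' : (fun n : ℕ => ((netMass μ n / (n * (n + 1)) : ℝ) : ℂ))
      =O[atTop] fun n => g n / (n : ℝ) ^ 2 := by
    refine .trans (.of_bound 1 ?_) (hnet.mul (isBigO_refl (fun n : ℕ => ((n : ℝ) ^ 2)⁻¹) _))
    filter_upwards [eventually_natCast_pos_and_ge 0] with n ⟨hn, _⟩
    rw [Complex.norm_real, one_mul, div_eq_mul_inv, norm_mul, norm_mul,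
      Real.norm_of_nonneg (by positivity : (0 : ℝ) ≤ ((n : ℝ) * (n + 1))⁻¹),
      Real.norm_of_nonneg (by positivity : (0 : ℝ) ≤ ((n : ℝ) ^ 2)⁻¹), sq]
    gcongr
    linarith
  refine ((isBigO_truncatedStieltjes_increment_sub hmass hz).add hnet').congr' ?_ .rfl
  filter_upwards [eventually_ne_atTop 0] with n hn
  have hn' : (n : ℂ) + 1 ≠ 0 := by exact_mod_cast n.succ_ne_zero
  push_cast
  field_simp
  ring

theorem exists_tendsto_truncatedStieltjes_natCast
    (hg : Tendsto (fun n : ℕ => g n / n) atTop (𝓝 0))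
    (hgs : Summable fun n : ℕ => g n / (n : ℝ) ^ 2)
    (hnet : (fun n : ℕ => netMass μ n) =O[atTop] g)
    (hmass : (fun n : ℕ => symmMass μ (n + 1) - symmMass μ n) =O[atTop] g)
    (hz : LocallyIntegrable (fun t : ℝ => ((t : ℂ) - z)⁻¹) μ) :
    ∃ S, Tendsto (fun n : ℕ => truncatedStieltjes μ z n) atTop (𝓝 S) := by
  obtain ⟨S, hS⟩ : ∃ S, Tendsto
      (fun n : ℕ => truncatedStieltjes μ z n - ((netMass μ n / n : ℝ) : ℂ)) atTop (𝓝 S) := by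
    refine exists_tendsto_of_summable_sub (summable_of_isBigO_nat hgs ?_)
    exact_mod_cast isBigO_truncatedStieltjes_sub_netMass_div_increment hnet hmass hz
  have hnet0 : Tendsto (fun n : ℕ => netMass μ n / n) atTop (𝓝 0) :=
    (hnet.mul (isBigO_refl (fun n : ℕ => (n : ℝ)⁻¹) _)).trans_tendsto hg
  exact ⟨S, by simpa using hS.add hnet0.ofReal⟩

theorem tendsto_truncatedStieltjes_sub_natFloor
    (hg : Tendsto (fun n : ℕ => g n / n) atTop (𝓝 0))
    (hmass : (fun n : ℕ => symmMass μ (n + 1) - symmMass μ n) =O[atTop] g)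
    (hz : LocallyIntegrable (fun t : ℝ => ((t : ℂ) - z)⁻¹) μ) :
    Tendsto (fun c => truncatedStieltjes μ z c - truncatedStieltjes μ z ⌊c⌋₊) atTop (𝓝 0) := by
  have hmass0 : Tendsto (fun n : ℕ => 2 / (n : ℝ) * (symmMass μ (n + 1) - symmMass μ n))
      atTop (𝓝 0) := by
    have h := (hmass.mul (isBigO_refl (fun n : ℕ => (n : ℝ)⁻¹) _)).trans_tendsto hg
    simpa only [mul_zero, div_eq_mul_inv, mul_assoc, mul_comm (_ - _)] using h.const_mul 2
  have hfloor := tendsto_nat_floor_atTop (α := ℝ)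
  refine squeeze_zero_norm' ?_ (hmass0.comp hfloor)
  filter_upwards [hfloor.eventually (eventually_natCast_pos_and_ge (2 * ‖z‖)),
    eventually_ge_atTop 0] with c ⟨hn, hzn⟩ hc
  refine (norm_truncatedStieltjes_sub_le hz hn hzn (Nat.floor_le hc)).trans ?_
  simp only [Function.comp_apply]
  gcongr
  exact symmMass_mono (Nat.lt_floor_add_one c).le

theorem exists_tendsto_truncatedStieltjes
    (hg : Tendsto (fun n : ℕ => g n / n) atTop (𝓝 0))
    (hgs : Summable fun n : ℕ => g n / (n : ℝ) ^ 2)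
    (hnet : (fun n : ℕ => netMass μ n) =O[atTop] g)
    (hmass : (fun n : ℕ => symmMass μ (n + 1) - symmMass μ n) =O[atTop] g)
    (hz : LocallyIntegrable (fun t : ℝ => ((t : ℂ) - z)⁻¹) μ) :
    ∃ S, Tendsto (truncatedStieltjes μ z) atTop (𝓝 S) := by
  obtain ⟨S, hS⟩ := exists_tendsto_truncatedStieltjes_natCast hg hgs hnet hmass hz
  refine ⟨S, ?_⟩
  simpa using (tendsto_truncatedStieltjes_sub_natFloor hg hmass hz).add
    (hS.comp tendsto_nat_floor_atTop)

theorem stieltjes_transform_exists_general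
    (hnet : (fun x : ℝ => μ.real (Icc 0 x) - μ.real (Icc (-x) 0))
      =O[atTop] fun x => x / Real.log x ^ 2)
    (hshift : (fun x : ℝ => μ.real (Icc 0 (x + 1)) - μ.real (Icc (-x) 0))
      =O[atTop] fun x => x / Real.log x ^ 2)
    (hz : LocallyIntegrable (fun t : ℝ => ((t : ℂ) - z)⁻¹) μ) :
    ∃ S, Tendsto (truncatedStieltjes μ z) atTop (𝓝 S) := by
  have hnet' : (fun x => netMass μ (x + 1)) =O[atTop] fun x => x / Real.log x ^ 2 :=
    (hnet.comp_tendsto (tendsto_atTop_add_const_right _ 1 tendsto_id)).trans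
      isBigO_add_one_div_log_sq
  have hmass : (fun x => symmMass μ (x + 1) - symmMass μ x)
      =O[atTop] fun x => x / Real.log x ^ 2 := by
    refine (((hshift.const_mul_left 2).sub hnet').sub hnet).congr' ?_ .rfl
    filter_upwards [eventually_ge_atTop 0] with x hx
    exact (symmMass_sub_eq hx (by linarith)).symm
  have hnat := tendsto_natCast_atTop_atTop (R := ℝ)
  exact exists_tendsto_truncatedStieltjes (tendsto_div_log_sq_div_self.comp hnat)
    summable_div_log_sq_div_sq (hnet.comp_tendsto hnat) (hmass.comp_tendsto hnat) hz

end LocallyFinite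

theorem truncatedStieltjes_pointMeasure {L : Set ℝ} {γ : ℝ → ℝ} (hγ : ∀ l ∈ L, 0 ≤ γ l) (z : ℂ)
    {c : ℝ} (hfin : (L ∩ Icc (-c) c).Finite) :
    truncatedStieltjes (pointMeasure L γ) z c =
      ∑' l : ↥(L ∩ Icc (-c) c), (γ l : ℂ) / (((l : ℝ) : ℂ) - z) := by
  simp only [truncatedStieltjes, setIntegral_pointMeasure hγ measurableSet_Icc hfin,
    Complex.real_smul, div_eq_mul_inv]

/-- Existence of the (principal-value) Stieltjes transform of a point measure
`Λ = Σ_{λ∈L} γ_λ δ_λ` satisfying `Λ([0,x+a]) - Λ([-x+b,0]) = O(x/log²x)`. -/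
theorem stieltjes_transform_exists
    (L : Set ℝ) (γ : ℝ → ℝ)
    (hLfin : ∀ a b : ℝ, (L ∩ Set.Icc a b).Finite)
    (hγpos : ∀ l ∈ L, 0 < γ l)
    (hgrowth : ∀ a b : ℝ,
      (fun x : ℝ => (∑' l : ↥(L ∩ Set.Icc 0 (x + a)), γ (l : ℝ))
          - (∑' l : ↥(L ∩ Set.Icc (-x + b) 0), γ (l : ℝ)))
        =O[atTop] (fun x : ℝ => x / (Real.log x) ^ 2)) :
    ∀ z : ℂ, (∀ l ∈ L, z ≠ (l : ℂ)) →
      ∃ S : ℂ, Tendsto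
        (fun c : ℝ => ∑' l : ↥(L ∩ Set.Icc (-c) c),
          ((γ (l : ℝ) : ℂ) / (((l : ℝ) : ℂ) - z)))
        atTop (𝓝 S) := by
  intro z _
  have hγ : ∀ l ∈ L, 0 ≤ γ l := fun l hl => (hγpos l hl).le
  have := isLocallyFiniteMeasure_pointMeasure (γ := γ) hLfin
  simp only [← measureReal_pointMeasure hγ measurableSet_Icc (hLfin _ _)] at hgrowth
  simp only [← truncatedStieltjes_pointMeasure hγ z (hLfin _ _)]
  exact stieltjes_transform_exists_general (by simpa using hgrowth 0 0) (by simpa using hgrowth 1 0)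
    (locallyIntegrable_pointMeasure hLfin _)
end

section
/- Assume that for all a, b ∈ ℝ one has Λ([0, x+a]) − Λ([−x+b, 0]) = O(x/log²x) as x → ∞, and define S_Λ(z) = lim_{c→∞} Σ_{λ ∈ L ∩ [−c,c]} γ_λ/(λ − z) for z ∈ ℂ∖L. Then the derivative of S_Λ is given by S'_Λ(z) = Σ_{λ ∈ L} γ_λ/(λ − z)², where this series converges absolutely and the convergence is uniform on compact subsets of ℂ∖L. -/
open Filter Set Asymptotics Topology

/-!
For real nodes `a i` and nonnegative weights `c i`, the imaginary part of `c i / (a i - w)` is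
`w.im * ‖c i / (a i - w) ^ 2‖`. These all have the sign of `w.im`, so convergence of the Stieltjes
transform along a single exhaustion by finite sets, at a single nonreal point `w`, already makes
the formal derivative series absolutely convergent at `w`. Since `‖a i - w‖ ≤ C * ‖a i - z‖` for
`z` in a compact set avoiding the nodes, the Weierstrass M-test propagates this to all such sets,
and locally uniform convergence of the derivatives allows differentiation term by term.
-/

lemma exists_dist_le_mul_dist {X : Type*} [PseudoMetricSpace X] {K F : Set X}
    (hK : IsCompact K) (hF : IsClosed F) (hKF : Disjoint K F) (w : X) :
    ∃ C : ℝ, ∀ z ∈ K, ∀ x ∈ F, dist x w ≤ C * dist x z := by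
  obtain ⟨δ, hδ, hsep⟩ := Metric.exists_pos_forall_lt_edist hK hF hKF
  obtain ⟨R, hR⟩ := hK.isBounded.subset_closedBall w
  refine ⟨1 + R / δ, fun z hz x hx => ?_⟩
  have hzw : dist z w ≤ R := hR hz
  have hδzx : (δ : ℝ) ≤ dist x z := by
    have h := hsep z hz x hx
    rw [edist_comm, edist_nndist, ENNReal.coe_lt_coe] at h
    exact_mod_cast h.le
  have hδ_pos : (0 : ℝ) < δ := hδ
  have hR_nonneg : 0 ≤ R := dist_nonneg.trans hzw
  calc dist x w ≤ dist x z + dist z w := dist_triangle x z w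
    _ ≤ dist x z + R / δ * δ := by rw [div_mul_cancel₀ R hδ_pos.ne']; gcongr
    _ ≤ dist x z + R / δ * dist x z := by gcongr
    _ = (1 + R / δ) * dist x z := by ring

section DivSubPow

variable {ι 𝕜 : Type*} [NormedField 𝕜] {a c : ι → 𝕜} {K : Set 𝕜} {w z : 𝕜} {n : ℕ}

lemma exists_summable_norm_div_sub_pow_le (hw : w ∉ range a)
    (hsum : Summable fun i => ‖c i / (a i - w) ^ n‖)
    (hK : IsCompact K) (hKa : K ⊆ (closure (range a))ᶜ) :
    ∃ u : ι → ℝ, Summable u ∧ ∀ i, ∀ z ∈ K, ‖c i / (a i - z) ^ n‖ ≤ u i := by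
  obtain ⟨C, hC⟩ :=
    exists_dist_le_mul_dist hK isClosed_closure (subset_compl_iff_disjoint_right.1 hKa) w
  refine ⟨_, hsum.mul_left (C ^ n), fun i z hz => ?_⟩
  have hle : ‖a i - w‖ ≤ C * ‖a i - z‖ := by
    simpa only [dist_eq_norm] using hC z hz (a i) (subset_closure (mem_range_self i))
  have hw_pos : 0 < ‖a i - w‖ := norm_sub_pos_iff.2 fun h => hw ⟨i, h⟩
  have hz_pos : 0 < ‖a i - z‖ :=
    norm_sub_pos_iff.2 fun h => hKa hz (subset_closure ⟨i, h⟩)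
  simp only [norm_div, norm_pow]
  rw [mul_div_assoc', div_le_div_iff₀ (by positivity) (by positivity)]
  calc ‖c i‖ * ‖a i - w‖ ^ n ≤ ‖c i‖ * (C * ‖a i - z‖) ^ n := by gcongr
    _ = C ^ n * ‖c i‖ * ‖a i - z‖ ^ n := by ring

lemma summable_norm_div_sub_pow (hw : w ∉ range a)
    (hsum : Summable fun i => ‖c i / (a i - w) ^ n‖) (hz : z ∉ closure (range a)) :
    Summable fun i => ‖c i / (a i - z) ^ n‖ := by
  obtain ⟨u, hu, hle⟩ := exists_summable_norm_div_sub_pow_le hw hsum isCompact_singleton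
    (singleton_subset_iff.2 hz)
  exact hu.of_nonneg_of_le (fun _ => norm_nonneg _) fun i => hle i z rfl

lemma tendstoUniformlyOn_tsum_div_sub_pow [CompleteSpace 𝕜] (hw : w ∉ range a)
    (hsum : Summable fun i => ‖c i / (a i - w) ^ n‖)
    (hK : IsCompact K) (hKa : K ⊆ (closure (range a))ᶜ) :
    TendstoUniformlyOn (fun (s : Finset ι) z => ∑ i ∈ s, c i / (a i - z) ^ n)
      (fun z => ∑' i, c i / (a i - z) ^ n) atTop K := by
  obtain ⟨u, hu, hle⟩ := exists_summable_norm_div_sub_pow_le hw hsum hK hKa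
  exact tendstoUniformlyOn_tsum hu hle

end DivSubPow

lemma hasDerivAt_const_div_sub {𝕜 : Type*} [NontriviallyNormedField 𝕜] {a z : 𝕜} (c : 𝕜)
    (hz : z ≠ a) : HasDerivAt (fun z => c / (a - z)) (c / (a - z) ^ 2) z := by
  simpa using (hasDerivAt_const z c).fun_div ((hasDerivAt_id z).const_sub a) (sub_ne_zero.2 hz.symm)

lemma hasDerivAt_of_hasSum_div_sub {ι 𝕜 : Type*} [RCLike 𝕜] {a c : ι → 𝕜} {w z : 𝕜}
    {T : SummationFilter ι} [T.NeBot] [T.LeAtTop] {S : 𝕜 → 𝕜}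
    (hS : ∀ z ∉ closure (range a), HasSum (fun i => c i / (a i - z)) (S z) T)
    (hw : w ∉ range a) (hsum : Summable fun i => ‖c i / (a i - w) ^ 2‖)
    (hz : z ∉ closure (range a)) :
    HasDerivAt S (∑' i, c i / (a i - z) ^ 2) z := by
  have hopen : IsOpen (closure (range a))ᶜ := isClosed_closure.isOpen_compl
  have hderiv : TendstoLocallyUniformlyOn (fun (s : Finset ι) z => ∑ i ∈ s, c i / (a i - z) ^ 2)
      (fun z => ∑' i, c i / (a i - z) ^ 2) T.filter (closure (range a))ᶜ :=
    (tendstoLocallyUniformlyOn_iff_forall_isCompact hopen).2 fun K hKa hK u hu =>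
      SummationFilter.le_atTop (tendstoUniformlyOn_tsum_div_sub_pow hw hsum hK hKa u hu)
  refine hasDerivAt_of_tendstoLocallyUniformlyOn hopen hderiv
    (Eventually.of_forall fun s y hy => ?_) hS hz
  exact HasDerivAt.fun_sum fun i _ =>
    hasDerivAt_const_div_sub (c i) fun h => hy (subset_closure ⟨i, h.symm⟩)

lemma im_ofReal_div_ofReal_sub {c : ℝ} (hc : 0 ≤ c) (x : ℝ) (w : ℂ) :
    ((c : ℂ) / (x - w)).im = w.im * ‖(c : ℂ) / (x - w) ^ 2‖ := by
  rw [norm_div, norm_pow, ← Complex.normSq_eq_norm_sq, Complex.norm_of_nonneg hc, Complex.div_im]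
  simp only [Complex.ofReal_im, Complex.ofReal_re, Complex.sub_im]
  ring

lemma summable_norm_div_sub_sq_of_hasSum_div_sub {ι : Type*} {T : SummationFilter ι} [T.NeBot]
    [T.LeAtTop] {a c : ι → ℝ} (hc : ∀ i, 0 ≤ c i) {w s : ℂ} (hw : w.im ≠ 0)
    (hs : HasSum (fun i => (c i : ℂ) / (a i - w)) s T) :
    Summable fun i => ‖(c i : ℂ) / (a i - w) ^ 2‖ := by
  have him : HasSum (fun i => w.im * ‖(c i : ℂ) / (a i - w) ^ 2‖) s.im T := by
    simpa only [Function.comp_def, Complex.imCLM_apply, im_ofReal_div_ofReal_sub (hc _)] using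
      hs.map Complex.imCLM Complex.imCLM.continuous
  have hnorm : HasSum (fun i => ‖(c i : ℂ) / (a i - w) ^ 2‖) (w.im⁻¹ * s.im) T := by
    simpa only [inv_mul_cancel_left₀ hw] using him.mul_left w.im⁻¹
  exact summable_of_sum_le (fun i => norm_nonneg _) fun t =>
    sum_le_hasSum t (fun i _ => norm_nonneg _) hnorm

lemma isClosed_of_forall_finite_inter_Icc {α : Type*} [LinearOrder α] [TopologicalSpace α]
    [OrderClosedTopology α] [CompactlyCoherentSpace α] [Nonempty α] {s : Set α}
    (hs : ∀ a b, (s ∩ Icc a b).Finite) : IsClosed s := by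
  refine (CompactlyCoherentSpace.isClosed_iff s).2 fun K hK => ?_
  obtain ⟨a, b, hKab⟩ := bddBelow_bddAbove_iff_subset_Icc.1 ⟨hK.bddBelow, hK.bddAbove⟩
  have hfin : (Subtype.val ⁻¹' (s ∩ Icc a b) : Set K).Finite :=
    (hs a b).preimage Subtype.val_injective.injOn
  exact (hfin.subset fun x hx => ⟨hx, hKab x.2⟩).isClosed

lemma isClosed_range_ofReal {L : Set ℝ} (hL : IsClosed L) :
    IsClosed (range fun l : L => ((l : ℝ) : ℂ)) :=
  (Complex.isometry_ofReal.isClosedEmbedding.comp hL.isClosedEmbedding_subtypeVal).isClosed_range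

section SymmetricSummation

variable {L : Set ℝ} (hL : ∀ a b : ℝ, (L ∩ Icc a b).Finite)

open scoped Classical in
/-- Principal-value summation over a locally finite set `L` of reals: the sum over `L` is the limit
of the finite sums over `L ∩ [-c, c]` as `c → ∞`. -/
noncomputable def symmetricSummation : SummationFilter L where
  filter := atTop.map fun c : ℝ => (hL (-c) c).toFinset.subtype (· ∈ L)

instance : (symmetricSummation hL).NeBot where
  ne_bot := atTop_neBot.map _

instance : (symmetricSummation hL).LeAtTop where
  le_atTop := by
    classical
    refine tendsto_atTop_finset_of_monotone (fun c d hcd => ?_) fun l => ⟨|(l : ℝ)|, ?_⟩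
    · exact Finset.subtype_mono <| Finite.toFinset_mono <|
        inter_subset_inter_right L (Icc_subset_Icc (neg_le_neg hcd) hcd)
    · simp [neg_abs_le, le_abs_self]

lemma hasSum_symmetricSummation_iff {M : Type*} [AddCommMonoid M] [TopologicalSpace M]
    {f : ℝ → M} {m : M} :
    HasSum (fun l : L => f l) m (symmetricSummation hL) ↔
      Tendsto (fun c : ℝ => ∑' l : ↥(L ∩ Icc (-c) c), f l) atTop (𝓝 m) := by
  classical
  have hsum (c : ℝ) : ∑' l : ↥(L ∩ Icc (-c) c), f l =
      ∑ l ∈ (hL (-c) c).toFinset.subtype (· ∈ L), f l := by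
    rw [Finset.sum_subtype_of_mem f fun x hx => ((hL (-c) c).mem_toFinset.1 hx).1,
      ← Finset.tsum_subtype', Finite.coe_toFinset]
  simp only [HasSum, symmetricSummation, tendsto_map'_iff, Function.comp_def, hsum]

end SymmetricSummation

theorem stieltjes_transform_derivative_general
    (L : Set ℝ) (γ : ℝ → ℝ)
    (hLfin : ∀ a b : ℝ, (L ∩ Set.Icc a b).Finite)
    (hγ : ∀ l ∈ L, 0 ≤ γ l)
    (S : ℂ → ℂ)
    (hS : ∀ z : ℂ, (∀ l ∈ L, z ≠ (l : ℂ)) →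
      Tendsto
        (fun c : ℝ => ∑' l : ↥(L ∩ Set.Icc (-c) c),
          ((γ (l : ℝ) : ℂ) / (((l : ℝ) : ℂ) - z)))
        atTop (𝓝 (S z))) :
    (∀ z : ℂ, (∀ l ∈ L, z ≠ (l : ℂ)) →
      Summable (fun l : ↥L => ‖(γ (l : ℝ) : ℂ) / (((l : ℝ) : ℂ) - z) ^ 2‖) ∧
      HasDerivAt S (∑' l : ↥L, (γ (l : ℝ) : ℂ) / (((l : ℝ) : ℂ) - z) ^ 2) z)
    ∧ (∀ K : Set ℂ, IsCompact K → (∀ z ∈ K, ∀ l ∈ L, z ≠ (l : ℂ)) →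
      TendstoUniformlyOn
        (fun (s : Finset ↥L) (z : ℂ) =>
          ∑ l ∈ s, (γ (l : ℝ) : ℂ) / (((l : ℝ) : ℂ) - z) ^ 2)
        (fun z => ∑' l : ↥L, (γ (l : ℝ) : ℂ) / (((l : ℝ) : ℂ) - z) ^ 2)
        atTop K) := by
  have hclosure : closure (range fun l : L => ((l : ℝ) : ℂ)) = range fun l : L => ((l : ℝ) : ℂ) :=
    (isClosed_range_ofReal (isClosed_of_forall_finite_inter_Icc hLfin)).closure_eq
  have hnotMem {z : ℂ} : z ∉ range (fun l : L => ((l : ℝ) : ℂ)) ↔ ∀ l ∈ L, z ≠ l := by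
    simp [eq_comm]
  have hHasSum (z : ℂ) (hz : z ∉ range fun l : L => ((l : ℝ) : ℂ)) :
      HasSum (fun l : L => (γ l : ℂ) / ((l : ℝ) - z)) (S z) (symmetricSummation hLfin) :=
    (hasSum_symmetricSummation_iff hLfin (f := fun l => (γ l : ℂ) / (l - z))).2
      (hS z (hnotMem.1 hz))
  have hI : Complex.I ∉ range fun l : L => ((l : ℝ) : ℂ) := by
    rintro ⟨l, hl⟩
    simpa using congrArg Complex.im hl
  have hsum := summable_norm_div_sub_sq_of_hasSum_div_sub (fun l : L => hγ l l.2)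
    (by simp) (hHasSum _ hI)
  refine ⟨fun z hz => ?_, fun K hK hKL => ?_⟩
  · rw [← hnotMem, ← hclosure] at hz
    exact ⟨summable_norm_div_sub_pow hI hsum hz,
      hasDerivAt_of_hasSum_div_sub (hclosure.symm ▸ hHasSum) hI hsum hz⟩
  · exact tendstoUniformlyOn_tsum_div_sub_pow hI hsum hK fun z hz =>
      hclosure.symm ▸ hnotMem.2 (hKL z hz)

/-- The derivative of the Stieltjes transform is `S'_Λ(z) = Σ_{λ∈L} γ_λ/(λ-z)²`,
with absolute convergence, and the convergence of the series is uniform on compact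
subsets of `ℂ∖L`. -/
theorem stieltjes_transform_derivative
    (L : Set ℝ) (γ : ℝ → ℝ)
    (hLfin : ∀ a b : ℝ, (L ∩ Set.Icc a b).Finite)
    (hγpos : ∀ l ∈ L, 0 < γ l)
    (hgrowth : ∀ a b : ℝ,
      (fun x : ℝ => (∑' l : ↥(L ∩ Set.Icc 0 (x + a)), γ (l : ℝ))
          - (∑' l : ↥(L ∩ Set.Icc (-x + b) 0), γ (l : ℝ)))
        =O[atTop] (fun x : ℝ => x / (Real.log x) ^ 2))
    (S : ℂ → ℂ)
    (hS : ∀ z : ℂ, (∀ l ∈ L, z ≠ (l : ℂ)) →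
      Tendsto
        (fun c : ℝ => ∑' l : ↥(L ∩ Set.Icc (-c) c),
          ((γ (l : ℝ) : ℂ) / (((l : ℝ) : ℂ) - z)))
        atTop (𝓝 (S z))) :
    (∀ z : ℂ, (∀ l ∈ L, z ≠ (l : ℂ)) →
      Summable (fun l : ↥L => ‖(γ (l : ℝ) : ℂ) / (((l : ℝ) : ℂ) - z) ^ 2‖) ∧
      HasDerivAt S (∑' l : ↥L, (γ (l : ℝ) : ℂ) / (((l : ℝ) : ℂ) - z) ^ 2) z)
    ∧ (∀ K : Set ℂ, IsCompact K → (∀ z ∈ K, ∀ l ∈ L, z ≠ (l : ℂ)) →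
      TendstoUniformlyOn
        (fun (s : Finset ↥L) (z : ℂ) =>
          ∑ l ∈ s, (γ (l : ℝ) : ℂ) / (((l : ℝ) : ℂ) - z) ^ 2)
        (fun z => ∑' l : ↥L, (γ (l : ℝ) : ℂ) / (((l : ℝ) : ℂ) - z) ^ 2)
        atTop K) := by
  exact stieltjes_transform_derivative_general L γ hLfin (fun l hl => (hγpos l hl).le) S hS
end

section
/- Let Λ = Σ_{j∈ℤ} γ_j δ_{λ_j}, where (λ_j)_{j∈ℤ} is a strictly increasing sequence of real numbers that is neither bounded from above nor from below, γ_j > 0 for all j, and L = {λ_j : j ∈ ℤ}. Assume that for some c > 0, Σ_{j=0}^{k} γ_j = ck + O(k/log²k) and Σ_{j=0}^{k} γ_{−j} = ck + O(k/log²k) as k → ∞. Assume further that Card(L ∩ [0,x]) = O(x) as x → ∞ and that for all a, b ∈ ℝ, Card(L ∩ [0, x+a]) − Card(L ∩ [−x+b, 0]) = O(x/log²x) as x → ∞. Then for all a, b ∈ ℝ, Λ([0, x+a]) − Λ([−x+b, 0]) = O(x/log²x) as x → ∞. -/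
open Filter Set Asymptotics Topology

/-!
Both `[0, y]` and `[-y, 0]` cut out blocks of consecutive indices starting near `0`, so the partial
sum hypotheses say that the mass of such an interval is `c` times the number `n` of points in it,
up to `O(n / log² n)`. As `n = O(x)`, subtracting the two sides leaves `c` times the difference of
the two counts, up to `O(x / log² x)`. The left half-line is the right half-line of the reflected
sequence `j ↦ -λ (-j)` with weights `j ↦ γ (-j)`.
-/

/-- The error scale `x / log² x`, used only as `x → ∞`; its values at `0` and `±1` are the junk
value `0`. -/
noncomputable def divLogSq (x : ℝ) : ℝ := x / Real.log x ^ 2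

lemma monotoneOn_divLogSq : MonotoneOn divLogSq (Ici (Real.exp 2)) := by
  intro u hu w hw huw
  have hu0 : 0 < u := (Real.exp_pos 2).trans_le hu
  have hw0 : 0 < w := (Real.exp_pos 2).trans_le hw
  have hlogw : 2 ≤ Real.log w := (Real.le_log_iff_exp_le hw0).2 hw
  have hpos : 0 < Real.log w / √w := div_pos (by linarith) (Real.sqrt_pos.2 hw0)
  have hsq : (Real.log w / √w) ^ 2 ≤ (Real.log u / √u) ^ 2 :=
    pow_le_pow_left₀ hpos.le (Real.log_div_sqrt_antitoneOn hu hw huw) 2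
  simpa only [divLogSq, div_pow, Real.sq_sqrt hu0.le, Real.sq_sqrt hw0.le, inv_div]
    using inv_anti₀ (pow_pos hpos 2) hsq

lemma tendsto_divLogSq_atTop : Tendsto divLogSq atTop atTop := by
  have hsmall : Tendsto (fun x : ℝ => Real.log x ^ 2 / x) atTop (𝓝[>] 0) := by
    refine tendsto_nhdsWithin_iff.2
      ⟨Real.isLittleO_pow_log_id_atTop.tendsto_div_nhds_zero, ?_⟩
    filter_upwards [eventually_gt_atTop 1] with x hx
    exact div_pos (pow_pos (Real.log_pos hx) 2) (by linarith)
  exact hsmall.inv_tendsto_nhdsGT_zero.congr fun x => inv_div _ _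

lemma divLogSq_isBigO_id : divLogSq =O[atTop] (id : ℝ → ℝ) := by
  refine IsBigO.of_bound' ?_
  filter_upwards [Real.tendsto_log_atTop.eventually_ge_atTop 1] with x hx
  rw [divLogSq, norm_div, id, norm_pow, Real.norm_of_nonneg (by linarith : 0 ≤ Real.log x)]
  exact div_le_self (norm_nonneg x) (one_le_pow₀ hx)

lemma divLogSq_mul_le {M x : ℝ} (hM : 1 ≤ M) (hx : 1 < x) :
    divLogSq (M * x) ≤ M * divLogSq x := by
  have hx0 : 0 < x := by linarith
  have hlog : Real.log x ≤ Real.log (M * x) :=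
    Real.log_le_log hx0 (le_mul_of_one_le_left hx0.le hM)
  have hlog0 : 0 < Real.log x := Real.log_pos hx
  calc M * x / Real.log (M * x) ^ 2 ≤ M * x / Real.log x ^ 2 := by gcongr
    _ = M * (x / Real.log x ^ 2) := mul_div_assoc ..

lemma isBigO_divLogSq_comp {α : Type*} {l : Filter α} {u v : α → ℝ}
    (hu : Tendsto u l atTop) (hv : Tendsto v l atTop) (huv : u =O[l] v) :
    (fun t => divLogSq (u t)) =O[l] (fun t => divLogSq (v t)) := by
  obtain ⟨M, huM⟩ := huv.bound
  refine IsBigO.of_bound (max M 1) ?_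
  filter_upwards [huM, hu.eventually_ge_atTop (Real.exp 2), hv.eventually_gt_atTop 1]
    with t huv_le hut hvt
  have hu1 : 1 < u t := (Real.one_lt_exp_iff.2 two_pos).trans_le hut
  have hle : u t ≤ max M 1 * v t := by
    rw [Real.norm_of_nonneg (by linarith), Real.norm_of_nonneg (by linarith)] at huv_le
    exact huv_le.trans (by gcongr; exact le_max_left M 1)
  have hnonneg {x : ℝ} (hx : 1 < x) : 0 ≤ divLogSq x := div_nonneg (by linarith) (sq_nonneg _)
  rw [Real.norm_of_nonneg (hnonneg hu1), Real.norm_of_nonneg (hnonneg hvt)]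
  exact (monotoneOn_divLogSq hut (hut.trans hle) hle).trans
    (divLogSq_mul_le (le_max_right M 1) hvt)

lemma isBigO_const_divLogSq_comp {α E : Type*} [NormedAddCommGroup E] {l : Filter α} {u : α → ℝ}
    (hu : Tendsto u l atTop) (C : E) : (fun _ => C) =O[l] (fun t => divLogSq (u t)) :=
  (isLittleO_const_left.2 <| .inr <|
    tendsto_norm_atTop_atTop.comp (tendsto_divLogSq_atTop.comp hu)).isBigO

lemma sum_Ico_add_sum_Icc {ι M : Type*} [LinearOrder ι] [LocallyFiniteOrder ι] [AddCommMonoid M]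
    (f : ι → M) {p r N : ι} (hpr : p ≤ r) (hrN : r ≤ N) :
    ∑ j ∈ Finset.Ico p r, f j + ∑ j ∈ Finset.Icc r N, f j = ∑ j ∈ Finset.Icc p N, f j := by
  have hdisj : Disjoint (Finset.Ico p r) (Finset.Icc r N) :=
    Finset.disjoint_left.2 fun _ hj hj' =>
      (Finset.mem_Ico.1 hj).2.not_ge (Finset.mem_Icc.1 hj').1
  rw [← Finset.sum_union hdisj]
  congr 1
  exact Finset.coe_injective (by push_cast; exact Ico_union_Icc_eq_Icc hpr hrN)

lemma exists_eventually_sum_Icc_eq_add {ι G : Type*} [LinearOrder ι] [LocallyFiniteOrder ι]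
    [AddCommGroup G] (f : ι → G) (p q : ι) :
    ∃ C, ∀ᶠ N in atTop, ∑ j ∈ Finset.Icc p N, f j = ∑ j ∈ Finset.Icc q N, f j + C := by
  refine ⟨∑ j ∈ Finset.Ico p (max p q), f j - ∑ j ∈ Finset.Ico q (max p q), f j, ?_⟩
  filter_upwards [eventually_ge_atTop (max p q)] with N hN
  rw [← sum_Ico_add_sum_Icc f (le_max_left p q) hN, ← sum_Ico_add_sum_Icc f (le_max_right p q) hN]
  abel

lemma sum_Icc_zero_natCast {M : Type*} [AddCommMonoid M] (f : ℤ → M) (k : ℕ) :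
    ∑ j ∈ Finset.Icc 0 (k : ℤ), f j = ∑ j ∈ Finset.range (k + 1), f j := by
  simp [Int.Icc_eq_finset_map]

section

variable {E : Type*} [NormedAddCommGroup E] [NormedSpace ℝ E]

lemma isBigO_sum_Icc_sub_card_smul {γ : ℤ → E} {c : E}
    (hsum : (fun k : ℕ => ∑ j ∈ Finset.range (k + 1), γ j - (k : ℝ) • c)
      =O[atTop] (fun k : ℕ => divLogSq k)) (p : ℤ) :
    (fun N : ℤ => ∑ j ∈ Finset.Icc p N, γ j - ((Finset.Icc p N).card : ℝ) • c)
      =O[atTop] (fun N : ℤ => divLogSq (Finset.Icc p N).card) := by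
  obtain ⟨C, hC⟩ := exists_eventually_sum_Icc_eq_add γ p 0
  rw [← Nat.map_cast_int_atTop, eventually_map] at hC
  rw [← Nat.map_cast_int_atTop, isBigO_map]
  have hcard : ∀ᶠ k : ℕ in atTop, ((Finset.Icc p (k : ℤ)).card : ℝ) = k + (1 - p) := by
    filter_upwards [eventually_ge_atTop p.toNat] with k hk
    have hcardInt : ((Finset.Icc p (k : ℤ)).card : ℤ) = k + (1 - p) := by
      rw [Int.card_Icc_of_le p k (by omega)]
      ring
    exact_mod_cast hcardInt
  have hcast : Tendsto (fun k : ℕ => (k : ℝ)) atTop atTop := tendsto_natCast_atTop_atTop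
  have hcard_atTop : Tendsto (fun k : ℕ => ((Finset.Icc p (k : ℤ)).card : ℝ)) atTop atTop :=
    (tendsto_congr' hcard).2 (tendsto_atTop_add_const_right _ _ hcast)
  have hcast_le : (fun k : ℕ => (k : ℝ)) =O[atTop] fun k => ((Finset.Icc p (k : ℤ)).card : ℝ) := by
    refine ((isBigO_refl _ _).sub
      ((isLittleO_const_id_atTop (1 - p : ℝ)).comp_tendsto hcard_atTop).isBigO).congr' ?_ .rfl
    filter_upwards [hcard] with k hk
    exact sub_eq_of_eq_add hk
  have hmain := (hsum.trans (isBigO_divLogSq_comp hcast hcard_atTop hcast_le)).add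
    (isBigO_const_divLogSq_comp hcard_atTop (C - (1 - p : ℝ) • c))
  refine hmain.congr' ?_ .rfl
  filter_upwards [hC, hcard] with k hCk hk
  simp only [Function.comp_apply]
  rw [hCk, hk, sum_Icc_zero_natCast, add_smul]
  abel

end

section

variable {α : Type*} [LinearOrder α] {f : ℤ → α} {y : α}

lemma exists_forall_apply_le_iff (hf : Monotone f) (hle : ∃ j, f j ≤ y) (hlt : ∃ j, y < f j) :
    ∃ N, ∀ j, f j ≤ y ↔ j ≤ N := by
  obtain ⟨J, hJ⟩ := hlt
  obtain ⟨N, hN, hmax⟩ := Int.exists_greatest_of_bdd (P := fun j => f j ≤ y)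
    ⟨J, fun j hj => (hf.reflect_lt (hj.trans_lt hJ)).le⟩ hle
  exact ⟨N, fun j => ⟨hmax j, fun hj => (hf hj).trans hN⟩⟩

lemma exists_forall_le_apply_iff (hf : Monotone f) (hlt : ∃ j, f j < y) (hle : ∃ j, y ≤ f j) :
    ∃ p, ∀ j, y ≤ f j ↔ p ≤ j := by
  obtain ⟨J, hJ⟩ := hlt
  obtain ⟨p, hp, hmin⟩ := Int.exists_least_of_bdd (P := fun j => y ≤ f j)
    ⟨J, fun j hj => (hf.reflect_lt (hJ.trans_le hj)).le⟩ hle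
  exact ⟨p, fun j => ⟨hmin j, fun hj => hp.trans (hf hj)⟩⟩

end

/-- `Card(L ∩ I)`, the number of points of the family `lam` in `I`; it is `0` if there are
infinitely many. -/
noncomputable def pointCount {ι X : Type*} (lam : ι → X) (I : Set X) : ℕ :=
  Nat.card ↥(range lam ∩ I)

/-- `Λ(I)` for `Λ = ∑ j, γ j δ_{lam j}`, where the weights may be vectors; it is `0` if the sum
does not converge. -/
noncomputable def atomicMass {ι X E : Type*} [AddCommMonoid E] [TopologicalSpace E]
    (lam : ι → X) (γ : ι → E) (I : Set X) : E := ∑' j : {j // lam j ∈ I}, γ j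

section

variable {ι X E : Type*} [AddCommMonoid E] [TopologicalSpace E] {lam : ι → X} {I : Set X}
  {s : Finset ι}

lemma pointCount_eq_card (hlam : Function.Injective lam) (hI : lam ⁻¹' I = s) :
    pointCount lam I = s.card := by
  rw [pointCount, inter_comm, ← image_preimage_eq_inter_range, hI,
    Nat.card_image_of_injective hlam]
  simp

lemma atomicMass_eq_sum (γ : ι → E) (hI : lam ⁻¹' I = s) :
    atomicMass lam γ I = ∑ j ∈ s, γ j := by
  change ∑' j : ↥(lam ⁻¹' I), γ j = _
  rw [hI]
  exact Finset.tsum_subtype s γ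

end

/-- The sequence `lam` reflected in the origin, indexed so as to be increasing again. -/
def reflected (lam : ℤ → ℝ) (j : ℤ) : ℝ := -lam (-j)

section

variable (lam : ℤ → ℝ)

variable {lam} in
lemma strictMono_reflected (hmono : StrictMono lam) : StrictMono (reflected lam) :=
  fun _ _ hij => neg_lt_neg (hmono (neg_lt_neg hij))

lemma range_reflected : range (reflected lam) = -range lam := by
  rw [← image_neg_eq_neg, ← range_comp]
  exact (Equiv.neg ℤ).surjective.range_comp (Neg.neg ∘ lam)

lemma pointCount_reflected (I : Set ℝ) : pointCount (reflected lam) I = pointCount lam (-I) := by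
  have himage : range (reflected lam) ∩ I = Neg.neg '' (range lam ∩ -I) := by
    rw [range_reflected, image_neg_eq_neg, inter_neg, neg_neg]
  rw [pointCount, himage, Nat.card_image_of_injective neg_injective, pointCount]

lemma atomicMass_reflected {E : Type*} [AddCommMonoid E] [TopologicalSpace E] (γ : ℤ → E)
    (I : Set ℝ) : atomicMass (reflected lam) (fun j => γ (-j)) I = atomicMass lam γ (-I) :=
  ((Equiv.neg ℤ).subtypeEquiv fun j => by simp [reflected]).tsum_eq
    (fun j : {j // lam j ∈ -I} => γ j)

end

lemma exists_preimage_Icc_zero_eq {lam : ℤ → ℝ} (hmono : StrictMono lam)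
    (hub : ¬ BddAbove (range lam)) (hlb : ¬ BddBelow (range lam)) :
    ∃ (p : ℤ) (N : ℝ → ℤ), Tendsto N atTop atTop ∧
      ∀ y, lam ⁻¹' Icc 0 y = Finset.Icc p (N y) := by
  have habove (y : ℝ) : ∃ j, y < lam j := by simpa using not_bddAbove_iff.1 hub y
  have hbelow (y : ℝ) : ∃ j, lam j < y := by simpa using not_bddBelow_iff.1 hlb y
  obtain ⟨p, hp⟩ := exists_forall_le_apply_iff hmono.monotone (hbelow 0)
    ((habove 0).imp fun _ => le_of_lt)
  choose N hN using fun y => exists_forall_apply_le_iff hmono.monotone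
    ((hbelow y).imp fun _ => le_of_lt) (habove y)
  refine ⟨p, N, tendsto_atTop.2 fun k => ?_, fun y => ?_⟩
  · filter_upwards [eventually_ge_atTop (lam k)] with y hy using (hN y k).1 hy
  · ext j
    simp [hp, hN]

lemma tendsto_pointCount_Icc_zero {lam : ℤ → ℝ} (hmono : StrictMono lam)
    (hub : ¬ BddAbove (range lam)) (hlb : ¬ BddBelow (range lam)) :
    Tendsto (fun y : ℝ => pointCount lam (Icc 0 y)) atTop atTop := by
  obtain ⟨p, N, hN, hpre⟩ := exists_preimage_Icc_zero_eq hmono hub hlb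
  simp only [fun y => pointCount_eq_card hmono.injective (hpre y), Int.card_Icc]
  refine tendsto_atTop.2 fun k => ?_
  filter_upwards [hN.eventually_ge_atTop (p + k)] with y hy
  omega

section

variable {E : Type*} [NormedAddCommGroup E] [NormedSpace ℝ E] {lam : ℤ → ℝ} {γ : ℤ → E} {c : E}
  {α : Type*} {l : Filter α} {u v : α → ℝ}

lemma isBigO_atomicMass_Icc_zero_left_sub_smul (hmono : StrictMono lam)
    (hub : ¬ BddAbove (range lam)) (hlb : ¬ BddBelow (range lam))
    (hsum : (fun k : ℕ => ∑ j ∈ Finset.range (k + 1), γ j - (k : ℝ) • c)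
      =O[atTop] (fun k : ℕ => divLogSq k))
    (hu : Tendsto u l atTop) (hv : Tendsto v l atTop)
    (hcount : (fun x => (pointCount lam (Icc 0 (u x)) : ℝ)) =O[l] v) :
    (fun x => atomicMass lam γ (Icc 0 (u x)) - (pointCount lam (Icc 0 (u x)) : ℝ) • c)
      =O[l] (fun x => divLogSq (v x)) := by
  have hcount_atTop := tendsto_natCast_atTop_atTop (R := ℝ).comp
    ((tendsto_pointCount_Icc_zero hmono hub hlb).comp hu)
  refine IsBigO.trans ?_ (isBigO_divLogSq_comp hcount_atTop hv hcount)
  obtain ⟨p, N, hN, hpre⟩ := exists_preimage_Icc_zero_eq hmono hub hlb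
  simp only [Function.comp_apply, fun y => pointCount_eq_card hmono.injective (hpre y),
    fun y => atomicMass_eq_sum γ (hpre y)]
  exact (isBigO_sum_Icc_sub_card_smul hsum p).comp_tendsto (hN.comp hu)

lemma isBigO_atomicMass_Icc_zero_right_sub_smul (hmono : StrictMono lam)
    (hub : ¬ BddAbove (range lam)) (hlb : ¬ BddBelow (range lam))
    (hsum : (fun k : ℕ => ∑ j ∈ Finset.range (k + 1), γ (-j) - (k : ℝ) • c)
      =O[atTop] (fun k : ℕ => divLogSq k))
    (hu : Tendsto u l atBot) (hv : Tendsto v l atTop)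
    (hcount : (fun x => (pointCount lam (Icc (u x) 0) : ℝ)) =O[l] v) :
    (fun x => atomicMass lam γ (Icc (u x) 0) - (pointCount lam (Icc (u x) 0) : ℝ) • c)
      =O[l] (fun x => divLogSq (v x)) := by
  have hneg (y : ℝ) : -Icc 0 (-y) = Icc y 0 := by rw [neg_Icc, neg_zero, neg_neg]
  have hmass := isBigO_atomicMass_Icc_zero_left_sub_smul (lam := reflected lam)
    (γ := fun j => γ (-j)) (u := fun x => -u x) (strictMono_reflected hmono)
    (by rwa [range_reflected, bddAbove_neg]) (by rwa [range_reflected, bddBelow_neg]) hsum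
    (tendsto_neg_atBot_atTop.comp hu) hv
    (by simpa only [pointCount_reflected, hneg] using hcount)
  simpa only [pointCount_reflected, atomicMass_reflected, hneg] using hmass

theorem growth_condition_from_counting_general (hmono : StrictMono lam)
    (hub : ¬ BddAbove (range lam)) (hlb : ¬ BddBelow (range lam))
    (hsum_right : (fun k : ℕ => ∑ j ∈ Finset.range (k + 1), γ j - (k : ℝ) • c)
      =O[atTop] (fun k : ℕ => divLogSq k))
    (hsum_left : (fun k : ℕ => ∑ j ∈ Finset.range (k + 1), γ (-j) - (k : ℝ) • c)
      =O[atTop] (fun k : ℕ => divLogSq k))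
    (hcount : (fun x : ℝ => (pointCount lam (Icc 0 x) : ℝ)) =O[atTop] (id : ℝ → ℝ)) {a b : ℝ}
    (hcount_sub : (fun x : ℝ => (pointCount lam (Icc 0 (x + a)) : ℝ)
      - pointCount lam (Icc (-x + b) 0)) =O[atTop] divLogSq) :
    (fun x : ℝ => atomicMass lam γ (Icc 0 (x + a)) - atomicMass lam γ (Icc (-x + b) 0))
      =O[atTop] divLogSq := by
  have htendsto_right : Tendsto (fun x : ℝ => x + a) atTop atTop :=
    tendsto_atTop_add_const_right _ a tendsto_id
  have htendsto_left : Tendsto (fun x : ℝ => -x + b) atTop atBot :=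
    tendsto_atBot_add_const_right _ b tendsto_neg_atTop_atBot
  have hcount_right : (fun x => (pointCount lam (Icc 0 (x + a)) : ℝ)) =O[atTop] (id : ℝ → ℝ) :=
    (hcount.comp_tendsto htendsto_right).trans <|
      (isBigO_refl _ _).add (isLittleO_const_id_atTop a).isBigO
  have hcount_left : (fun x => (pointCount lam (Icc (-x + b) 0) : ℝ)) =O[atTop] (id : ℝ → ℝ) :=
    (hcount_right.sub (hcount_sub.trans divLogSq_isBigO_id)).congr_left fun x => sub_sub_cancel _ _
  have hmass_right :=
    isBigO_atomicMass_Icc_zero_left_sub_smul hmono hub hlb hsum_right htendsto_right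
      tendsto_id hcount_right
  have hmass_left :=
    isBigO_atomicMass_Icc_zero_right_sub_smul hmono hub hlb hsum_left htendsto_left
      tendsto_id hcount_left
  have hcount_sub_smul :=
    ((ContinuousLinearMap.toSpanSingleton ℝ c).isBigO_comp _ atTop).trans hcount_sub
  refine ((hmass_right.sub hmass_left).add hcount_sub_smul).congr_left fun x => ?_
  rw [ContinuousLinearMap.toSpanSingleton_apply, sub_smul]
  abel

end

/-- Sufficient condition for the growth assumption on `Λ = Σ_j γ_j δ_{λ_j}`:
if the partial sums of the weights are `ck + O(k/log²k)` on both sides, the counting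
of `L = {λ_j}` is `O(x)` and the centered counting differences are `O(x/log²x)`,
then `Λ([0,x+a]) - Λ([-x+b,0]) = O(x/log²x)` for all `a, b`. -/
theorem growth_condition_from_counting
    (lam : ℤ → ℝ) (γ : ℤ → ℝ) (c : ℝ) (hc : 0 < c)
    (hmono : StrictMono lam)
    (hub : ¬ BddAbove (Set.range lam)) (hlb : ¬ BddBelow (Set.range lam))
    (hγpos : ∀ j, 0 < γ j)
    (hsum1 : (fun k : ℕ => (∑ j ∈ Finset.range (k + 1), γ (j : ℤ)) - c * (k : ℝ))
      =O[atTop] (fun k : ℕ => (k : ℝ) / (Real.log (k : ℝ)) ^ 2))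
    (hsum2 : (fun k : ℕ => (∑ j ∈ Finset.range (k + 1), γ (-(j : ℤ))) - c * (k : ℝ))
      =O[atTop] (fun k : ℕ => (k : ℝ) / (Real.log (k : ℝ)) ^ 2))
    (hcard1 : (fun x : ℝ => (Nat.card ↥(Set.range lam ∩ Set.Icc 0 x) : ℝ))
      =O[atTop] (fun x : ℝ => x))
    (hcard2 : ∀ a b : ℝ,
      (fun x : ℝ => (Nat.card ↥(Set.range lam ∩ Set.Icc 0 (x + a)) : ℝ)
          - (Nat.card ↥(Set.range lam ∩ Set.Icc (-x + b) 0) : ℝ))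
        =O[atTop] (fun x : ℝ => x / (Real.log x) ^ 2)) :
    ∀ a b : ℝ,
      (fun x : ℝ => (∑' j : {j : ℤ // lam j ∈ Set.Icc 0 (x + a)}, γ (j : ℤ))
          - (∑' j : {j : ℤ // lam j ∈ Set.Icc (-x + b) 0}, γ (j : ℤ)))
        =O[atTop] (fun x : ℝ => x / (Real.log x) ^ 2) :=
  fun a b => growth_condition_from_counting_general (c := c) hmono hub hlb
    (by simpa only [divLogSq, smul_eq_mul, mul_comm c] using hsum1)
    (by simpa only [divLogSq, smul_eq_mul, mul_comm c] using hsum2) hcard1 (hcard2 a b)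
end

section
/- Let Λ = Σ_{j∈ℤ} γ_j δ_{λ_j} with (λ_j)_{j∈ℤ} strictly increasing, unbounded above and below, γ_j > 0, L = {λ_j : j ∈ ℤ}, and assume: for some c > 0, Σ_{j=0}^{k} γ_j = ck + O(k/log²k) and Σ_{j=0}^{k} γ_{−j} = ck + O(k/log²k) as k → ∞; Card(L ∩ [0,x]) = O(x); and for all a, b ∈ ℝ, Card(L ∩ [0, x+a]) − Card(L ∩ [−x+b, 0]) = O(x/log²x) as x → ∞. Let S_Λ(z) = lim_{c'→∞} Σ_{λ ∈ L ∩ [−c',c']} γ_λ/(λ − z), and fix h ∈ ℝ. Then the set L' := S_Λ^{−1}(h) = {z ∈ ℂ∖L : S_Λ(z) = h} also satisfies: Card(L' ∩ [0,x]) = O(x) as x → ∞, and for all a, b ∈ ℝ, Card(L' ∩ [0, x+a]) − Card(L' ∩ [−x+b, 0]) = O(x/log²x) as x → ∞. -/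
open Filter Set Asymptotics Topology

/-!
Between consecutive poles a Stieltjes transform with positive masses increases from `-∞` to `+∞`:
its increment over a pole-free interval is a convergent series of positive terms, and near a pole
the term of that pole alone forces divergence. Hence `S = h` has exactly one solution between
consecutive poles, the level set and the set of poles separate each other, and their numbers of
points in any interval differ by at most one, which is absorbed by both error terms.
-/

section Separation

variable {α : Type*} [LinearOrder α] {A B : Set α}

/-- `A` separates `B` if strictly between any two points of `B` there is a point of `A`. Two sets
interlace when each separates the other. -/
def Separates (A B : Set α) : Prop :=
  ∀ x ∈ B, ∀ y ∈ B, x < y → ∃ z ∈ A, x < z ∧ z < y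

namespace Separates

lemma inter_ordConnected (h : Separates A B) (I : Set α) [I.OrdConnected] :
    Separates (A ∩ I) (B ∩ I) := by
  rintro x ⟨hxB, hxI⟩ y ⟨hyB, hyI⟩ hxy
  obtain ⟨z, hzA, hxz, hzy⟩ := h x hxB y hyB hxy
  exact ⟨z, ⟨hzA, ‹I.OrdConnected›.out hxI hyI ⟨hxz.le, hzy.le⟩⟩, hxz, hzy⟩

lemma card_le_ncard_add_one (h : Separates A B) (hA : A.Finite) {s : Finset α} (hs : ↑s ⊆ B) :
    s.card ≤ A.ncard + 1 := by
  rw [ncard_eq_toFinset_card A hA]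
  refine Finset.card_le_of_interleaved fun x hx y hy hxy _ => ?_
  simpa only [Finite.mem_toFinset] using h x (hs hx) y (hs hy) hxy

lemma finite (h : Separates A B) (hA : A.Finite) : B.Finite := by
  by_contra hB
  obtain ⟨s, hsB, hs⟩ := Set.Infinite.exists_subset_card_eq hB (A.ncard + 2)
  have := h.card_le_ncard_add_one hA hsB
  omega

lemma ncard_le_ncard_add_one (h : Separates A B) (hA : A.Finite) : B.ncard ≤ A.ncard + 1 := by
  rw [ncard_eq_toFinset_card B (h.finite hA)]
  exact h.card_le_ncard_add_one hA (h.finite hA).coe_toFinset.subset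

lemma abs_ncard_sub_ncard_le_one (hAB : Separates A B) (hBA : Separates B A) (hA : A.Finite) :
    |(B.ncard : ℝ) - A.ncard| ≤ 1 := by
  have hB : (B.ncard : ℝ) ≤ A.ncard + 1 := mod_cast hAB.ncard_le_ncard_add_one hA
  have hA' : (A.ncard : ℝ) ≤ B.ncard + 1 := mod_cast hBA.ncard_le_ncard_add_one (hAB.finite hA)
  exact abs_sub_le_iff.2 ⟨by linarith, by linarith⟩

lemma ncard_inter_sub_ncard_inter_isBigO_one {κ : Type*} (hAB : Separates A B) (hBA : Separates B A)
    {I : κ → Set α} [∀ x, (I x).OrdConnected] (hA : ∀ x, (A ∩ I x).Finite) (l : Filter κ) :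
    (fun x => ((B ∩ I x).ncard : ℝ) - (A ∩ I x).ncard) =O[l] fun _ => (1 : ℝ) :=
  .of_bound 1 <| .of_forall fun x => by
    simpa using (hAB.inter_ordConnected (I x)).abs_ncard_sub_ncard_le_one
      (hBA.inter_ordConnected (I x)) (hA x)

end Separates

end Separation

lemma lt_or_lt_of_notMem_Icc {α : Type*} [LinearOrder α] {p t u : α} (hp : p ∉ Icc t u) :
    p < t ∨ u < p :=
  (not_and_or.1 hp).imp lt_of_not_ge lt_of_not_ge

lemma div_sub_sub_div_sub {K : Type*} [Field K] {p t u : K} (g : K)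
    (h : (p - t) * (p - u) ≠ 0) :
    g / (p - u) - g / (p - t) = g * (u - t) / ((p - t) * (p - u)) := by
  obtain ⟨ht, hu⟩ := mul_ne_zero_iff.1 h
  field_simp
  ring

section Kernel

variable {K : Type*} [Field K] [LinearOrder K] [IsStrictOrderedRing K] {g p t u : K}

lemma sub_mul_sub_pos_of_notMem_Icc (htu : t ≤ u) (hp : p ∉ Icc t u) :
    0 < (p - t) * (p - u) := by
  rcases lt_or_lt_of_notMem_Icc hp with h | h
  · exact mul_pos_of_neg_of_neg (by linarith) (by linarith)
  · exact mul_pos (by linarith) (by linarith)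

lemma div_sub_sub_div_sub_nonneg (hg : 0 ≤ g) (htu : t ≤ u) (hp : p ∉ Icc t u) :
    0 ≤ g / (p - u) - g / (p - t) := by
  have hpos := sub_mul_sub_pos_of_notMem_Icc htu hp
  rw [div_sub_sub_div_sub g hpos.ne']
  exact div_nonneg (mul_nonneg hg (sub_nonneg.2 htu)) hpos.le

lemma div_sub_sub_div_sub_pos (hg : 0 < g) (htu : t < u) (hp : p ∉ Icc t u) :
    0 < g / (p - u) - g / (p - t) := by
  have hpos := sub_mul_sub_pos_of_notMem_Icc htu.le hp
  rw [div_sub_sub_div_sub g hpos.ne']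
  exact div_pos (mul_pos hg (sub_pos.2 htu)) hpos

variable {a b η : K}

lemma mul_sub_mul_sub_le_of_notMem_Icc (hη : 0 ≤ η) (hat : a + η ≤ t) (htu : t ≤ u)
    (hub : u + η ≤ b) (hp : p ∉ Icc a b) :
    η * ((p - a) * (p - b)) ≤ (b - a) * ((p - t) * (p - u)) := by
  rcases lt_or_lt_of_notMem_Icc hp with h | h
  · have hu : η * (b - p) ≤ (b - a) * (u - p) := by nlinarith
    have ht : a - p ≤ t - p := by linarith
    have hmul := mul_le_mul ht hu (mul_nonneg hη (by linarith)) (by linarith)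
    linarith
  · have ht : η * (p - a) ≤ (b - a) * (p - t) := by nlinarith
    have hu : p - b ≤ p - u := by linarith
    have hmul := mul_le_mul hu ht (mul_nonneg hη (by linarith)) (by linarith)
    linarith

lemma mul_div_sub_sub_div_sub_le (hg : 0 ≤ g) (hη : 0 ≤ η) (hat : a + η ≤ t) (htu : t ≤ u)
    (hub : u + η ≤ b) (hp : p ∉ Icc a b) :
    η * (g / (p - u) - g / (p - t)) ≤ (u - t) * (g / (p - b) - g / (p - a)) := by
  have hab := sub_mul_sub_pos_of_notMem_Icc (by linarith) hp
  have htu' := sub_mul_sub_pos_of_notMem_Icc htu fun h =>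
    hp (Icc_subset_Icc (by linarith) (by linarith) h)
  rw [div_sub_sub_div_sub g htu'.ne', div_sub_sub_div_sub g hab.ne', mul_div_assoc',
    mul_div_assoc', div_le_div_iff₀ htu' hab]
  calc η * (g * (u - t)) * ((p - a) * (p - b))
      = g * (u - t) * (η * ((p - a) * (p - b))) := by ring
    _ ≤ g * (u - t) * ((b - a) * ((p - t) * (p - u))) :=
        mul_le_mul_of_nonneg_left (mul_sub_mul_sub_le_of_notMem_Icc hη hat htu hub hp)
          (mul_nonneg hg (sub_nonneg.2 htu))
    _ = (u - t) * (g * (b - a)) * ((p - t) * (p - u)) := by ring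

variable [TopologicalSpace K] [OrderTopology K]

lemma tendsto_div_sub_nhdsLT (hg : 0 < g) (p : K) :
    Tendsto (fun u => g / (p - u)) (𝓝[<] p) atTop := by
  have hzero : Tendsto (fun u => p - u) (𝓝[<] p) (𝓝 0) :=
    ((continuous_sub_left p).tendsto' p 0 (sub_self p)).mono_left nhdsWithin_le_nhds
  have hpos : ∀ᶠ u in 𝓝[<] p, p - u ∈ Ioi 0 :=
    eventually_mem_nhdsWithin.mono fun u hu => sub_pos.2 (mem_Iio.1 hu)
  simp only [div_eq_mul_inv]
  exact (tendsto_nhdsWithin_iff.2 ⟨hzero, hpos⟩).inv_tendsto_nhdsGT_zero.const_mul_atTop hg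

lemma tendsto_div_sub_nhdsGT (hg : 0 < g) (p : K) :
    Tendsto (fun u => g / (p - u)) (𝓝[>] p) atBot := by
  have hzero : Tendsto (fun u => p - u) (𝓝[>] p) (𝓝 0) :=
    ((continuous_sub_left p).tendsto' p 0 (sub_self p)).mono_left nhdsWithin_le_nhds
  have hneg : ∀ᶠ u in 𝓝[>] p, p - u ∈ Iio 0 :=
    eventually_mem_nhdsWithin.mono fun u hu => sub_neg.2 (mem_Ioi.1 hu)
  simp only [div_eq_mul_inv]
  exact (tendsto_nhdsWithin_iff.2 ⟨hzero, hneg⟩).inv_tendsto_nhdsLT_zero.const_mul_atBot hg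

end Kernel

section LocallyFinite

variable {α : Type*} [LinearOrder α] [TopologicalSpace α] [CompactIccSpace α]

lemma tendsto_cofinite_cocompact_of_monotone [NoMaxOrder α] [NoMinOrder α]
    [OrderClosedTopology α] {f : ℤ → α} (hf : Monotone f) (hub : ¬ BddAbove (range f))
    (hlb : ¬ BddBelow (range f)) : Tendsto f cofinite (cocompact α) := by
  rw [Int.cofinite_eq, cocompact_eq_atBot_atTop]
  exact (tendsto_atBot_atBot_of_monotone' hf hlb).sup_sup
    (tendsto_atTop_atTop_of_monotone' hf hub)

lemma finite_preimage_Icc {ι : Type*} {f : ι → α} (hf : Tendsto f cofinite (cocompact α))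
    (u v : α) : (f ⁻¹' Icc u v).Finite :=
  (hf.eventually isCompact_Icc.compl_mem_cocompact).subset fun _ hj hj' => hj' hj

lemma finite_range_inter_Icc {ι : Type*} {f : ι → α} (hf : Tendsto f cofinite (cocompact α))
    (u v : α) : (range f ∩ Icc u v).Finite := by
  rw [← image_preimage_eq_range_inter]
  exact (finite_preimage_Icc hf u v).image f

end LocallyFinite

section Increments

variable {ι : Type*} {lam γ : ι → ℝ} {s : ℝ → ℝ}

/-- On intervals without poles, the increments of `s` are those of the Stieltjes transform
`t ↦ ∑ j, γ j / (lam j - t)`. Only the series of increments is required to converge, so `s` may be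
a principal value. -/
def HasStieltjesIncrements (lam γ : ι → ℝ) (s : ℝ → ℝ) : Prop :=
  ∀ ⦃t u : ℝ⦄, t ≤ u → (∀ j, lam j ∉ Icc t u) →
    HasSum (fun j => γ j / (lam j - u) - γ j / (lam j - t)) (s u - s t)

namespace HasStieltjesIncrements

lemma of_tendsto {κ : Type*} [SemilatticeSup κ] [Nonempty κ] (hγ : ∀ j, 0 ≤ γ j)
    {F : κ → Finset ι} (hF : Tendsto F atTop atTop)
    (hs : ∀ t, (∀ j, t ≠ lam j) →
      Tendsto (fun r => ∑ j ∈ F r, γ j / (lam j - t)) atTop (𝓝 (s t))) :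
    HasStieltjesIncrements lam γ s := by
  intro t u htu hfree
  have ht : ∀ j, t ≠ lam j := fun j h => hfree j (h ▸ left_mem_Icc.2 htu)
  have hu : ∀ j, u ≠ lam j := fun j h => hfree j (h ▸ right_mem_Icc.2 htu)
  have hmono := Finset.sum_mono_set_of_nonneg fun j =>
    div_sub_sub_div_sub_nonneg (hγ j) htu (hfree j)
  rw [HasSum, SummationFilter.unconditional_filter,
    tendsto_iff_tendsto_subseq_of_monotone hmono hF]
  simpa only [Function.comp_def, Finset.sum_sub_distrib] using (hs u hu).sub (hs t ht)

variable (hs : HasStieltjesIncrements lam γ s)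

include hs

lemma term_sub_le (hγ : ∀ j, 0 ≤ γ j) {t u : ℝ} (htu : t ≤ u) (hfree : ∀ j, lam j ∉ Icc t u)
    (k : ι) : γ k / (lam k - u) - γ k / (lam k - t) ≤ s u - s t :=
  le_hasSum (hs htu hfree) k fun j _ => div_sub_sub_div_sub_nonneg (hγ j) htu (hfree j)

lemma le (hγ : ∀ j, 0 ≤ γ j) {t u : ℝ} (htu : t ≤ u) (hfree : ∀ j, lam j ∉ Icc t u) :
    s t ≤ s u :=
  sub_nonneg.1 <| (hs htu hfree).nonneg fun j => div_sub_sub_div_sub_nonneg (hγ j) htu (hfree j)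

lemma lt [Nonempty ι] (hγ : ∀ j, 0 < γ j) {t u : ℝ} (htu : t < u)
    (hfree : ∀ j, lam j ∉ Icc t u) : s t < s u := by
  obtain ⟨k⟩ := ‹Nonempty ι›
  exact sub_pos.1 <| (div_sub_sub_div_sub_pos (hγ k) htu (hfree k)).trans_le
    (hs.term_sub_le (fun j => (hγ j).le) htu.le hfree k)

-- Comparing increments term by term with those over a larger pole-free interval bounds the
-- difference quotients of `s` without differentiating the series.
lemma mul_sub_le (hγ : ∀ j, 0 ≤ γ j) {a b t u η : ℝ} (hη : 0 ≤ η) (hat : a + η ≤ t) (htu : t ≤ u)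
    (hub : u + η ≤ b) (hfree : ∀ j, lam j ∉ Icc a b) :
    η * (s u - s t) ≤ (u - t) * (s b - s a) := by
  have hfree' : ∀ j, lam j ∉ Icc t u := fun j h =>
    hfree j (Icc_subset_Icc (by linarith) (by linarith) h)
  exact hasSum_le (fun j => mul_div_sub_sub_div_sub_le (hγ j) hη hat htu hub (hfree j))
    ((hs htu hfree').mul_left η) ((hs (by linarith) hfree).mul_left (u - t))

lemma continuousAt (hγ : ∀ j, 0 ≤ γ j) {t : ℝ} (ht : (range lam)ᶜ ∈ 𝓝 t) : ContinuousAt s t := by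
  obtain ⟨ε, hε, hεt⟩ := (nhds_basis_Icc_pos t).mem_iff.1 ht
  have hfree : ∀ j, lam j ∉ Icc (t - ε) (t + ε) := fun j h => hεt h ⟨j, rfl⟩
  have hη : 0 < ε / 2 := half_pos hε
  have hlip : ∀ {v w}, t - ε / 2 ≤ v → v ≤ w → w ≤ t + ε / 2 →
      |s w - s v| ≤ (s (t + ε) - s (t - ε)) / (ε / 2) * |w - v| := by
    intro v w hv hvw hw
    have hle := hs.le hγ hvw fun j h => hfree j (Icc_subset_Icc (by linarith) (by linarith) h)
    rw [abs_of_nonneg (sub_nonneg.2 hle), abs_of_nonneg (sub_nonneg.2 hvw), div_mul_eq_mul_div,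
      le_div_iff₀ hη]
    linarith [hs.mul_sub_le hγ hη.le (by linarith) hvw (by linarith) hfree]
  refine continuousAt_of_locally_lipschitz hη ((s (t + ε) - s (t - ε)) / (ε / 2)) fun y hy => ?_
  rw [Real.dist_eq, abs_lt] at hy
  rcases le_total t y with hty | hyt
  · exact hlip (by linarith) hty (by linarith)
  · rw [dist_comm (s y), dist_comm y]
    exact hlip (by linarith) hyt (by linarith)

lemma tendsto_nhdsLT_atTop (hγ : ∀ j, 0 ≤ γ j) {k : ι} (hk : 0 < γ k) {a : ℝ} (ha : a < lam k)
    (hfree : ∀ j, lam j ∉ Ico a (lam k)) : Tendsto s (𝓝[<] lam k) atTop := by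
  refine tendsto_atTop_mono' _ ?_ (tendsto_atTop_add_const_right _ (s a - γ k / (lam k - a))
    (tendsto_div_sub_nhdsLT hk (lam k)))
  filter_upwards [Ioo_mem_nhdsLT ha] with u hu
  linarith [hs.term_sub_le hγ hu.1.le (fun j h => hfree j ⟨h.1, h.2.trans_lt hu.2⟩) k]

lemma tendsto_nhdsGT_atBot (hγ : ∀ j, 0 ≤ γ j) {k : ι} (hk : 0 < γ k) {b : ℝ} (hb : lam k < b)
    (hfree : ∀ j, lam j ∉ Ioc (lam k) b) : Tendsto s (𝓝[>] lam k) atBot := by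
  refine tendsto_atBot_mono' _ ?_ (tendsto_atBot_add_const_right _ (s b - γ k / (lam k - b))
    (tendsto_div_sub_nhdsGT hk (lam k)))
  filter_upwards [Ioo_mem_nhdsGT hb] with u hu
  linarith [hs.term_sub_le hγ hu.2.le (fun j h => hfree j ⟨hu.1.trans_le h.1, h.2⟩) k]

lemma surjOn_Ioo (hγ : ∀ j, 0 ≤ γ j) {i k : ι} (hi : 0 < γ i) (hk : 0 < γ k)
    (hik : lam i < lam k) (hfree : ∀ j, lam j ∉ Ioo (lam i) (lam k)) :
    SurjOn s (Ioo (lam i) (lam k)) univ := by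
  obtain ⟨m, him, hmk⟩ := exists_between hik
  refine ContinuousOn.surjOn_of_tendsto ⟨m, him, hmk⟩ (fun t ht => ?_) ?_ ?_
  · refine (hs.continuousAt hγ ?_).continuousWithinAt
    filter_upwards [Ioo_mem_nhds ht.1 ht.2]
    rintro _ hj ⟨j, rfl⟩
    exact hfree j hj
  · exact (tendsto_comp_coe_Ioo_atBot hik).2 <| hs.tendsto_nhdsGT_atBot hγ hi him
      fun j h => hfree j ⟨h.1, h.2.trans_lt hmk⟩
  · exact (tendsto_comp_coe_Ioo_atTop hik).2 <| hs.tendsto_nhdsLT_atTop hγ hk hmk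
      fun j h => hfree j ⟨him.trans_le h.1, h.2⟩

lemma range_separates_level_set [Nonempty ι] (hγ : ∀ j, 0 < γ j) (h : ℝ) :
    Separates (range lam) {t | (∀ j, t ≠ lam j) ∧ s t = h} := by
  rintro x ⟨hx, hsx⟩ y ⟨hy, hsy⟩ hxy
  by_contra! hno
  refine (hs.lt hγ hxy fun j hj => ?_).ne (hsx.trans hsy.symm)
  exact (hno _ ⟨j, rfl⟩ (hj.1.lt_of_ne (hx j))).not_gt (hj.2.lt_of_ne (hy j).symm)

lemma level_set_separates_range (hγ : ∀ j, 0 < γ j) (hlam : Tendsto lam cofinite (cocompact ℝ))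
    (h : ℝ) : Separates {t | (∀ j, t ≠ lam j) ∧ s t = h} (range lam) := by
  rintro _ ⟨i, rfl⟩ _ ⟨l, rfl⟩ hil
  obtain ⟨k, ⟨hik, hkl⟩, hmin⟩ := Finite.exists_minimalFor lam {j | lam j ∈ Ioc (lam i) (lam l)}
    ((finite_preimage_Icc hlam _ _).subset fun _ hj => Ioc_subset_Icc_self hj) ⟨l, hil, le_rfl⟩
  have hfree : ∀ j, lam j ∉ Ioo (lam i) (lam k) := fun j hj =>
    (hmin ⟨hj.1, hj.2.le.trans hkl⟩ hj.2.le).not_gt hj.2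
  obtain ⟨t, ht, hst⟩ := hs.surjOn_Ioo (fun j => (hγ j).le) (hγ i) (hγ k) hik hfree (mem_univ h)
  exact ⟨t, ⟨fun j htj => hfree j (htj ▸ ht), hst⟩, ht.1, ht.2.trans_le hkl⟩

end HasStieltjesIncrements

end Increments

section PrincipalValue

variable {ι : Type*} {lam γ : ι → ℝ}

lemma tsum_subtype_Icc_eq_ofReal_sum {u v : ℝ} (hfin : (lam ⁻¹' Icc u v).Finite) (t : ℝ) :
    ∑' j : {j // lam j ∈ Icc u v}, (γ j : ℂ) / ((lam j : ℂ) - t) =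
      ((∑ j ∈ hfin.toFinset, γ j / (lam j - t) : ℝ) : ℂ) := by
  push_cast
  rw [← Finset.tsum_subtype' hfin.toFinset fun j => (γ j : ℂ) / ((lam j : ℂ) - t),
    hfin.coe_toFinset]
  rfl

lemma exists_hasStieltjesIncrements_of_tendsto (hγ : ∀ j, 0 ≤ γ j)
    (hlam : Tendsto lam cofinite (cocompact ℝ)) {S : ℂ → ℂ}
    (hS : ∀ t : ℝ, (∀ j, t ≠ lam j) →
      Tendsto (fun r : ℝ => ∑' j : {j // lam j ∈ Icc (-r) r}, (γ j : ℂ) / ((lam j : ℂ) - t))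
        atTop (𝓝 (S t))) :
    ∃ s : ℝ → ℝ, HasStieltjesIncrements lam γ s ∧ ∀ t : ℝ, (∀ j, t ≠ lam j) → S t = s t := by
  have hfin := fun r : ℝ => finite_preimage_Icc hlam (-r) r
  have hF : Tendsto (fun r => (hfin r).toFinset) atTop atTop := by
    refine tendsto_atTop_finset_of_monotone (fun r r' hrr' => ?_) fun j => ⟨|lam j|, ?_⟩
    · exact Finite.toFinset_subset_toFinset.2 <|
        preimage_mono <| Icc_subset_Icc (neg_le_neg hrr') hrr'
    · exact (Finite.mem_toFinset _).2 (abs_le.1 le_rfl)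
  have hlim : ∀ t : ℝ, (∀ j, t ≠ lam j) →
      ∃ y : ℝ, Tendsto (fun r => ∑ j ∈ (hfin r).toFinset, γ j / (lam j - t)) atTop (𝓝 y) ∧
        S t = y := by
    intro t ht
    have hSt := (hS t ht).congr fun r => tsum_subtype_Icc_eq_ofReal_sum (hfin r) t
    obtain ⟨y, hy⟩ : S t ∈ range ((↑) : ℝ → ℂ) :=
      Complex.isUniformEmbedding_ofReal.isClosedEmbedding.isClosed_range.mem_of_tendsto hSt
        (.of_forall fun r => ⟨_, rfl⟩)
    rw [← hy] at hSt
    exact ⟨y, tendsto_ofReal_iff.1 hSt, hy.symm⟩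
  choose! s hs hSs using hlim
  exact ⟨s, .of_tendsto hγ hF hs, hSs⟩

lemma range_and_level_set_separate [Nonempty ι] (hlam : Tendsto lam cofinite (cocompact ℝ))
    (hγ : ∀ j, 0 < γ j) {S : ℂ → ℂ}
    (hS : ∀ t : ℝ, (∀ j, t ≠ lam j) →
      Tendsto (fun r : ℝ => ∑' j : {j // lam j ∈ Icc (-r) r}, (γ j : ℂ) / ((lam j : ℂ) - t))
        atTop (𝓝 (S t)))
    (h : ℝ) :
    Separates (range lam) {t : ℝ | (∀ j, t ≠ lam j) ∧ S t = h} ∧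
      Separates {t : ℝ | (∀ j, t ≠ lam j) ∧ S t = h} (range lam) := by
  obtain ⟨s, hs, hSs⟩ := exists_hasStieltjesIncrements_of_tendsto (fun j => (hγ j).le) hlam hS
  have hlevel : {t : ℝ | (∀ j, t ≠ lam j) ∧ S t = h} = {t | (∀ j, t ≠ lam j) ∧ s t = h} := by
    ext t
    exact and_congr_right fun ht => by rw [hSs t ht, Complex.ofReal_inj]
  rw [hlevel]
  exact ⟨hs.range_separates_level_set hγ h, hs.level_set_separates_range hγ hlam h⟩

end PrincipalValue

lemma one_isBigO_div_log_pow (n : ℕ) :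
    (fun _ : ℝ => (1 : ℝ)) =O[atTop] fun x : ℝ => x / Real.log x ^ n := by
  have hlog : (fun x : ℝ => Real.log x ^ n * (Real.log x ^ n)⁻¹) =O[atTop]
      fun x : ℝ => x * (Real.log x ^ n)⁻¹ :=
    Real.isLittleO_pow_log_id_atTop.isBigO.mul (isBigO_refl _ _)
  refine hlog.congr' ?_ (.of_forall fun x => (div_eq_mul_inv _ _).symm)
  filter_upwards [eventually_gt_atTop 1] with x hx
  exact mul_inv_cancel₀ (pow_pos (Real.log_pos hx) n).ne'

theorem stieltjes_level_set_counting_general {ι : Type*} [Nonempty ι] (lam γ : ι → ℝ)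
    (hlam : Tendsto lam cofinite (cocompact ℝ)) (hγpos : ∀ j, 0 < γ j)
    (hcard1 : (fun x : ℝ => (Nat.card ↥(range lam ∩ Icc 0 x) : ℝ)) =O[atTop] fun x : ℝ => x)
    (hcard2 : ∀ a b : ℝ,
      (fun x : ℝ => (Nat.card ↥(range lam ∩ Icc 0 (x + a)) : ℝ)
          - (Nat.card ↥(range lam ∩ Icc (-x + b) 0) : ℝ))
        =O[atTop] fun x : ℝ => x / Real.log x ^ 2)
    (S : ℂ → ℂ)
    (hS : ∀ t : ℝ, (∀ j, t ≠ lam j) →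
      Tendsto (fun r : ℝ => ∑' j : {j // lam j ∈ Icc (-r) r}, (γ j : ℂ) / ((lam j : ℂ) - t))
        atTop (𝓝 (S t)))
    (h : ℝ) :
    (fun x : ℝ => (Nat.card ↥({t : ℝ | (∀ j, t ≠ lam j) ∧ S t = h} ∩ Icc 0 x) : ℝ))
      =O[atTop] (fun x : ℝ => x)
    ∧ ∀ a b : ℝ,
      (fun x : ℝ => (Nat.card ↥({t : ℝ | (∀ j, t ≠ lam j) ∧ S t = h} ∩ Icc 0 (x + a)) : ℝ)
          - (Nat.card ↥({t : ℝ | (∀ j, t ≠ lam j) ∧ S t = h} ∩ Icc (-x + b) 0) : ℝ))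
        =O[atTop] fun x : ℝ => x / Real.log x ^ 2 := by
  simp only [Nat.card_coe_set_eq] at hcard1 hcard2 ⊢
  obtain ⟨hLL', hL'L⟩ := range_and_level_set_separate hlam hγpos hS h
  have hcount (u v : ℝ → ℝ) := hLL'.ncard_inter_sub_ncard_inter_isBigO_one hL'L
    (fun x => finite_range_inter_Icc hlam (u x) (v x)) atTop
  refine ⟨?_, fun a b => ?_⟩
  · exact (((hcount 0 id).trans (isLittleO_const_id_atTop 1).isBigO).add hcard1).congr_left
      fun x => sub_add_cancel _ _
  · exact ((((hcount 0 (· + a)).sub (hcount (-· + b) 0)).trans (one_isBigO_div_log_pow 2)).add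
      (hcard2 a b)).congr_left fun x => by simp only [Pi.zero_apply]; ring

/-- The level set `L' = S_Λ^{-1}(h)` inherits the counting estimates of `L`:
`Card(L' ∩ [0,x]) = O(x)` and, for all `a, b`,
`Card(L' ∩ [0,x+a]) - Card(L' ∩ [-x+b,0]) = O(x/log²x)`. -/
theorem stieltjes_level_set_counting
    (lam : ℤ → ℝ) (γ : ℤ → ℝ) (c : ℝ) (hc : 0 < c)
    (hmono : StrictMono lam)
    (hub : ¬ BddAbove (Set.range lam)) (hlb : ¬ BddBelow (Set.range lam))
    (hγpos : ∀ j, 0 < γ j)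
    (hsum1 : (fun k : ℕ => (∑ j ∈ Finset.range (k + 1), γ (j : ℤ)) - c * (k : ℝ))
      =O[atTop] (fun k : ℕ => (k : ℝ) / (Real.log (k : ℝ)) ^ 2))
    (hsum2 : (fun k : ℕ => (∑ j ∈ Finset.range (k + 1), γ (-(j : ℤ))) - c * (k : ℝ))
      =O[atTop] (fun k : ℕ => (k : ℝ) / (Real.log (k : ℝ)) ^ 2))
    (hcard1 : (fun x : ℝ => (Nat.card ↥(Set.range lam ∩ Set.Icc 0 x) : ℝ))
      =O[atTop] (fun x : ℝ => x))
    (hcard2 : ∀ a b : ℝ,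
      (fun x : ℝ => (Nat.card ↥(Set.range lam ∩ Set.Icc 0 (x + a)) : ℝ)
          - (Nat.card ↥(Set.range lam ∩ Set.Icc (-x + b) 0) : ℝ))
        =O[atTop] (fun x : ℝ => x / (Real.log x) ^ 2))
    (S : ℂ → ℂ)
    (hS : ∀ z : ℂ, (∀ j : ℤ, z ≠ (lam j : ℂ)) →
      Tendsto
        (fun c' : ℝ => ∑' j : {j : ℤ // lam j ∈ Set.Icc (-c') c'},
          ((γ (j : ℤ) : ℂ) / ((lam (j : ℤ) : ℂ) - z)))
        atTop (𝓝 (S z)))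
    (h : ℝ) :
    (fun x : ℝ =>
        (Nat.card ↥({t : ℝ | (∀ j : ℤ, t ≠ lam j) ∧ S (t : ℂ) = (h : ℂ)}
          ∩ Set.Icc 0 x) : ℝ))
      =O[atTop] (fun x : ℝ => x)
    ∧ ∀ a b : ℝ,
      (fun x : ℝ =>
          (Nat.card ↥({t : ℝ | (∀ j : ℤ, t ≠ lam j) ∧ S (t : ℂ) = (h : ℂ)}
            ∩ Set.Icc 0 (x + a)) : ℝ)
          - (Nat.card ↥({t : ℝ | (∀ j : ℤ, t ≠ lam j) ∧ S (t : ℂ) = (h : ℂ)}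
            ∩ Set.Icc (-x + b) 0) : ℝ))
        =O[atTop] (fun x : ℝ => x / (Real.log x) ^ 2) := by
  exact stieltjes_level_set_counting_general lam γ
    (tendsto_cofinite_cocompact_of_monotone hmono.monotone hub hlb) hγpos hcard1 hcard2 S
    (fun t ht => hS t (mod_cast ht)) h
end

section
/- Let n ≥ 1, let (λ_j)_{j∈ℤ} be a strictly increasing sequence of real numbers with λ_{j+n} = λ_j + 2πn for all j ∈ ℤ, and let (γ_j)_{j∈ℤ} be positive reals with γ_{j+n} = γ_j for all j. Then for every z ∈ ℂ with z ∉ {λ_j : j ∈ ℤ}, the limit lim_{k→∞} Σ_{j=−kn}^{kn−1} γ_j/(λ_j − z) exists and equals (1/2n) Σ_{j=0}^{n−1} γ_j cot((λ_j − z)/(2n)), which also equals Σ_{j=0}^{n−1} (γ_j/(2n)) · i(u_j + u)/(u_j − u), where u_j = e^{iλ_j/n} and u = e^{iz/n}. -/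
open Filter Set Topology BigOperators

/-!
Periodicity splits the sum over `[-kn, kn)` into `n` symmetric sums `∑ γ_r / (λ_r - z + 2πnm)` over
`m ∈ [-k, k)`, one for each residue `r` modulo `n`. Each of these is a rescaled partial sum of
Euler's expansion `π cot (πx) = ∑ 1 / (x + m)`, so it converges on its own. The exponential form is
`cot (θ/2) = i (e^{iθ} + 1) / (e^{iθ} - 1)`.
-/

theorem sum_Icc_inv_add_intCast_eq_sum_cotTerm (x : ℂ) (k : ℕ) :
    ∑ m ∈ Finset.Icc (-(k : ℤ)) k, (x + m)⁻¹ = 1 / x + ∑ j ∈ Finset.range k, cotTerm x j := by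
  induction k with
  | zero => simp
  | succ k ih =>
    push_cast
    rw [Finset.sum_Icc_succ_eq_add_endpoints, ih, Finset.sum_range_succ, cotTerm]
    push_cast
    ring

theorem hasSum_inv_add_intCast_symmetricIco {x : ℂ} (hx : x ∈ Complex.integerComplement) :
    HasSum (fun m : ℤ => (x + m)⁻¹) (Real.pi * Complex.cot (Real.pi * x))
      (SummationFilter.symmetricIco ℤ) := by
  have hIcc : HasSum (fun m : ℤ => (x + m)⁻¹) (Real.pi * Complex.cot (Real.pi * x))
      (SummationFilter.symmetricIcc ℤ) := by
    rw [SummationFilter.hasSum_symmetricIcc_iff]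
    simp_rw [sum_Icc_inv_add_intCast_eq_sum_cotTerm]
    simpa only [add_sub_cancel] using (tendsto_logDeriv_euler_cot_sub hx).const_add (1 / x)
  have hend : Tendsto (fun k : ℕ => (x + k)⁻¹) atTop (𝓝 0) :=
    tendsto_inv₀_cobounded.comp
      ((tendsto_const_add_cobounded x).comp tendsto_natCast_atTop_cobounded)
  exact hIcc.hasSum_symmetricIco_of_hasSum_symmetricIcc (by simpa using hend.neg)

theorem hasSum_inv_add_intCast_mul_symmetricIco {w ω : ℂ} (hω : ω ≠ 0)
    (hw : ∀ m : ℤ, w + m * ω ≠ 0) :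
    HasSum (fun m : ℤ => (w + m * ω)⁻¹) (Real.pi / ω * Complex.cot (Real.pi * w / ω))
      (SummationFilter.symmetricIco ℤ) := by
  have hx : w / ω ∈ Complex.integerComplement := by
    rintro ⟨m, hm⟩
    apply hw (-m)
    rw [Int.cast_neg, hm]
    field
  convert! (hasSum_inv_add_intCast_symmetricIco hx).mul_left ω⁻¹ using 1
  · funext m
    rw [← mul_inv, mul_add, mul_div_cancel₀ _ hω, mul_comm ω]
  · rw [mul_div_assoc]
    ring

theorem sum_Ico_mul_eq_sum_Ico_sum_range {M : Type*} [AddCommMonoid M] (n : ℕ) [NeZero n]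
    (a b : ℤ) (f : ℤ → M) :
    ∑ j ∈ Finset.Ico (a * n) (b * n), f j =
      ∑ m ∈ Finset.Ico a b, ∑ r ∈ Finset.range n, f (r + m * n) := by
  have hn : (0 : ℤ) < n := mod_cast NeZero.pos n
  simp_rw [Finset.sum_range fun r => f (r + _)]
  rw [← Finset.sum_product']
  refine Finset.sum_equiv (Int.divModEquiv n) (fun j => ?_) fun j _ => ?_
  · simp [Int.le_ediv_iff_mul_le hn, Int.ediv_lt_iff_lt_mul hn]
  · rw [add_comm]
    exact congrArg f ((Int.divModEquiv n).symm_apply_apply j).symm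

theorem tendsto_sum_Ico_mul_of_hasSum_symmetricIco {M : Type*} [AddCommMonoid M]
    [TopologicalSpace M] [ContinuousAdd M] {n : ℕ} [NeZero n] {f : ℤ → M} {s : ℕ → M}
    (hf : ∀ r < n, HasSum (fun m : ℤ => f (r + m * n)) (s r) (SummationFilter.symmetricIco ℤ)) :
    Tendsto (fun k : ℕ => ∑ j ∈ Finset.Ico (-((k : ℤ) * n)) (k * n), f j) atTop
      (𝓝 (∑ r ∈ Finset.range n, s r)) := by
  simp_rw [← neg_mul, sum_Ico_mul_eq_sum_Ico_sum_range]
  exact SummationFilter.hasSum_symmetricIco_int_iff.1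
    (hasSum_sum fun r hr => hf r (Finset.mem_range.1 hr))

theorem tendsto_sum_Ico_div_of_add_period {n : ℕ} [NeZero n] {ω : ℂ} (hω : ω ≠ 0)
    {a γ : ℤ → ℂ} (ha_add : ∀ j, a (j + n) = a j + ω) (ha : ∀ j, a j ≠ 0)
    (hγ : Function.Periodic γ n) :
    Tendsto (fun k : ℕ => ∑ j ∈ Finset.Ico (-((k : ℤ) * n)) (k * n), γ j / a j) atTop
      (𝓝 (Real.pi / ω * ∑ r ∈ Finset.range n, γ r * Complex.cot (Real.pi * a r / ω))) := by
  have ha_shift (r m : ℤ) : a (r + m * n) = a r + m * ω := by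
    simpa using AddConstMapClass.map_add_zsmul (⟨a, ha_add⟩ : AddConstMap ℤ ℂ n ω) r m
  have hγ_shift (r m : ℤ) : γ (r + m * n) = γ r := hγ.int_mul m r
  rw [Finset.mul_sum]
  refine tendsto_sum_Ico_mul_of_hasSum_symmetricIco fun r _ => ?_
  simp_rw [ha_shift, hγ_shift, div_eq_mul_inv (γ r), mul_left_comm _ (γ r)]
  exact (hasSum_inv_add_intCast_mul_symmetricIco hω fun m => ha_shift r m ▸ ha _).mul_left (γ r)

theorem cot_half_sub_eq_exp_ratio (a b : ℂ) :
    Complex.cot ((a - b) / 2) =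
      Complex.I * (Complex.exp (Complex.I * a) + Complex.exp (Complex.I * b)) /
        (Complex.exp (Complex.I * a) - Complex.exp (Complex.I * b)) := by
  set q := Complex.exp (Complex.I * (a - b)) with hq
  have ha : Complex.exp (Complex.I * a) = Complex.exp (Complex.I * b) * q := by
    rw [hq, ← Complex.exp_add]
    ring_nf
  calc Complex.cot ((a - b) / 2)
      = (q + 1) / (Complex.I * (1 - q)) := by
        rw [Complex.cot_eq_exp_ratio, hq]
        ring_nf
    _ = Complex.I * (q + 1) / (q - 1) := by
        rw [← div_div, Complex.div_I, ← neg_sub q 1, neg_div_neg_eq, mul_comm]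
    _ = _ := by
        rw [ha, ← mul_add_one, ← mul_sub_one, mul_left_comm,
          mul_div_mul_left _ _ (Complex.exp_ne_zero _)]

theorem periodic_stieltjes_cotangent_general
    (n : ℕ) (hn : 0 < n) (lam : ℤ → ℂ) (γ : ℤ → ℂ)
    (hlamper : ∀ j : ℤ, lam (j + (n : ℤ)) = lam j + 2 * Real.pi * (n : ℂ))
    (hγper : ∀ j : ℤ, γ (j + (n : ℤ)) = γ j)
    (z : ℂ) (hz : ∀ j : ℤ, z ≠ lam j) :
    Tendsto
      (fun k : ℕ => ∑ j ∈ Finset.Ico (-((k : ℤ) * (n : ℤ))) ((k : ℤ) * (n : ℤ)),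
        (γ j / (lam j - z)))
      atTop
      (𝓝 ((1 / (2 * (n : ℂ))) * ∑ j ∈ Finset.range n,
        γ j * Complex.cot ((lam j - z) / (2 * (n : ℂ)))))
    ∧ (1 / (2 * (n : ℂ))) * (∑ j ∈ Finset.range n,
        γ j * Complex.cot ((lam j - z) / (2 * (n : ℂ))))
      = ∑ j ∈ Finset.range n,
          (γ j / (2 * (n : ℂ))) *
            (Complex.I *
              (Complex.exp (Complex.I * lam j / (n : ℂ)) + Complex.exp (Complex.I * z / (n : ℂ)))
              / (Complex.exp (Complex.I * lam j / (n : ℂ))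
                - Complex.exp (Complex.I * z / (n : ℂ)))) := by
  have : NeZero n := ⟨hn.ne'⟩
  have hpi : (Real.pi : ℂ) ≠ 0 := Complex.ofReal_ne_zero.2 Real.pi_ne_zero
  have hperiod : (2 * Real.pi * n : ℂ) ≠ 0 :=
    mul_ne_zero (mul_ne_zero two_ne_zero hpi) (NeZero.ne _)
  constructor
  · have hcoeff : (Real.pi : ℂ) / (2 * Real.pi * n) = 1 / (2 * n) := by field
    have harg (w : ℂ) : Real.pi * w / (2 * Real.pi * n) = w / (2 * n) := by field
    have hadd (j : ℤ) : lam (j + n) - z = lam j - z + 2 * Real.pi * n := by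
      rw [hlamper, add_sub_right_comm]
    simpa only [hcoeff, harg] using
      tendsto_sum_Ico_div_of_add_period hperiod hadd (fun j => sub_ne_zero.2 (hz j).symm) hγper
  · rw [Finset.mul_sum]
    refine Finset.sum_congr rfl fun j _ => ?_
    rw [show (lam j - z) / (2 * n) = (lam j / n - z / n) / 2 by field,
      cot_half_sub_eq_exp_ratio]
    simp only [mul_div_assoc]
    ring

/-- For a `2πn`-periodic configuration `λ_{j+n} = λ_j + 2πn` with `n`-periodic positive
weights, the principal value `lim_k Σ_{j=-kn}^{kn-1} γ_j/(λ_j - z)` exists and equals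
`(1/2n) Σ_{j=0}^{n-1} γ_j cot((λ_j - z)/2n)`, which equals
`Σ_{j=0}^{n-1} (γ_j/2n) · i(u_j + u)/(u_j - u)` with `u_j = e^{iλ_j/n}`, `u = e^{iz/n}`. -/
theorem periodic_stieltjes_cotangent
    (n : ℕ) (hn : 0 < n) (lam : ℤ → ℝ) (γ : ℤ → ℝ)
    (hmono : StrictMono lam)
    (hlamper : ∀ j : ℤ, lam (j + (n : ℤ)) = lam j + 2 * Real.pi * (n : ℝ))
    (hγpos : ∀ j, 0 < γ j)
    (hγper : ∀ j : ℤ, γ (j + (n : ℤ)) = γ j)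
    (z : ℂ) (hz : ∀ j : ℤ, z ≠ (lam j : ℂ)) :
    Tendsto
      (fun k : ℕ => ∑ j ∈ Finset.Ico (-((k : ℤ) * (n : ℤ))) ((k : ℤ) * (n : ℤ)),
        ((γ j : ℂ) / ((lam j : ℂ) - z)))
      atTop
      (𝓝 ((1 / (2 * (n : ℂ))) * ∑ j ∈ Finset.range n,
        (γ (j : ℤ) : ℂ) * Complex.cot (((lam (j : ℤ) : ℂ) - z) / (2 * (n : ℂ)))))
    ∧ (1 / (2 * (n : ℂ))) * (∑ j ∈ Finset.range n,
        (γ (j : ℤ) : ℂ) * Complex.cot (((lam (j : ℤ) : ℂ) - z) / (2 * (n : ℂ))))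
      = ∑ j ∈ Finset.range n,
          ((γ (j : ℤ) : ℂ) / (2 * (n : ℂ))) *
            (Complex.I *
              (Complex.exp (Complex.I * (lam (j : ℤ) : ℂ) / (n : ℂ))
                + Complex.exp (Complex.I * z / (n : ℂ)))
              / (Complex.exp (Complex.I * (lam (j : ℤ) : ℂ) / (n : ℂ))
                - Complex.exp (Complex.I * z / (n : ℂ)))) := by
  exact periodic_stieltjes_cotangent_general n hn (fun j => lam j) (fun j => γ j)
    (fun j => by simp [hlamper]) (fun j => by simp [hγper]) z hz
end

section
/- Let (f_n)_{n≥1} and (g_n)_{n≥1} be sequences of meromorphic functions on an open set U ⊂ ℂ, converging uniformly on U, with respect to the chordal distance d on the Riemann sphere, to functions f and g respectively (which are then necessarily meromorphic on U). Assume that none of these functions is identically ∞ on any connected component of U, and that f and g have no common pole. Then the sequence (f_n + g_n)_{n≥1} converges to f + g uniformly on every compact subset of U, with respect to the distance d. -/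
open Filter Set Topology

/-- The chordal (spherical) distance on the Riemann sphere `ℂ ∪ {∞}`,
modelled as `Option ℂ` with `none` representing the point `∞`. -/
noncomputable def chordal : Option ℂ → Option ℂ → ℝ
  | none, none => 0
  | none, some b => 1 / Real.sqrt (1 + ‖b‖ ^ 2)
  | some a, none => 1 / Real.sqrt (1 + ‖a‖ ^ 2)
  | some a, some b => ‖b - a‖ / Real.sqrt ((1 + ‖a‖ ^ 2) * (1 + ‖b‖ ^ 2))

/-- Pointwise sum of two sphere-valued functions: finite values add, and the sum is
`∞` as soon as one of the arguments is `∞`. -/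
def sphereAdd : Option ℂ → Option ℂ → Option ℂ
  | some a, some b => some (a + b)
  | _, _ => none

/-- The inversion `w ↦ 1/w` on the Riemann sphere `ℂ ∪ {∞}`. -/
noncomputable def sphereInv : Option ℂ → Option ℂ
  | none => some 0
  | some z => if z = 0 then none else some z⁻¹

/-- A sphere-valued map is meromorphic on an open set `U` if near every point of `U`
either it or its pointwise inverse is (the coercion of) an analytic `ℂ`-valued map. -/
def MeroSphereOn (F : ℂ → Option ℂ) (U : Set ℂ) : Prop :=
  ∀ z ∈ U, ∃ V ∈ nhds z, ∃ f : ℂ → ℂ, (∀ x ∈ V, AnalyticAt ℂ f x) ∧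
    ((∀ w ∈ V, F w = some (f w)) ∨ (∀ w ∈ V, sphereInv (F w) = some (f w)))

/-!
The chordal distance is the Euclidean distance transported from a sphere by inversion, so it
metrizes the compact space `ℂ ∪ {∞}`. Addition on `ℂ ∪ {∞}` is continuous away from `(∞, ∞)`, and
`z ↦ (F z, G z)` maps the compact set `K` into this region. By Heine–Cantor, addition is uniformly
continuous near the image of `K`, hence it preserves uniform convergence on `K`.
-/

open OnePoint EuclideanGeometry Bornology

theorem tendstoUniformlyOn_comp_of_isCompact_image {ι α β γ : Type*} [UniformSpace β]
    [UniformSpace γ] {p : Filter ι} {s : Set α} {φ : ι → α → β} {Φ : α → β} {H : β → γ}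
    (hs : IsCompact (Φ '' s)) (hH : ∀ a ∈ s, ContinuousAt H (Φ a))
    (hφ : TendstoUniformlyOn φ Φ p s) :
    TendstoUniformlyOn (fun i a => H (φ i a)) (fun a => H (Φ a)) p s := by
  intro r hr
  filter_upwards [hφ _ (hs.uniformContinuousAt_of_continuousAt H (forall_mem_image.2 hH) hr)]
    with i hi a ha
  exact hi a ha (mem_image_of_mem Φ ha)

theorem tendsto_add_nhds_prod_cobounded {E : Type*} [SeminormedAddCommGroup E] (a : E) :
    Tendsto (fun q : E × E => q.1 + q.2) (𝓝 a ×ˢ cobounded E) (cobounded E) := by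
  rw [← tendsto_norm_atTop_iff_cobounded]
  have hfst : Tendsto (fun q : E × E => -‖q.1‖) (𝓝 a ×ˢ cobounded E) (𝓝 (-‖a‖)) :=
    tendsto_fst.norm.neg
  have hsnd : Tendsto (fun q : E × E => ‖q.2‖) (𝓝 a ×ˢ cobounded E) atTop :=
    tendsto_norm_cobounded_atTop.comp tendsto_snd
  refine tendsto_atTop_mono (fun q => ?_) (hfst.add_atTop hsnd)
  have hq : ‖q.2‖ ≤ ‖q.1 + q.2‖ + ‖q.1‖ := by
    simpa only [add_sub_cancel_left] using norm_sub_le (q.1 + q.2) q.1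
  linarith

theorem tendsto_coe_cobounded_nhds_infty {E : Type*} [PseudoMetricSpace E] :
    Tendsto ((↑) : E → OnePoint E) (cobounded E) (𝓝 ∞) := by
  refine tendsto_coe_infty.mono_left ?_
  rw [coclosedCompact_eq_cocompact]
  exact Metric.cobounded_le_cocompact

/-- The inverse stereographic projection of `ℂ ∪ {∞}` onto the sphere of diameter one in
`ℂ × ℝ` that touches the plane `ℂ × {1}` at `(0, 1)`, projected from its point `0`. It is realized
as the inversion in the unit sphere applied to `ℂ × {1}`, so that Euclidean distances in the image
are exactly chordal distances. -/
noncomputable def stereographicEmbedding : OnePoint ℂ → WithLp 2 (ℂ × ℝ)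
  | ∞ => 0
  | (z : ℂ) => inversion 0 1 (WithLp.toLp 2 (z, 1))

theorem norm_toLp_one (z : ℂ) : ‖WithLp.toLp 2 (z, (1 : ℝ))‖ = √(1 + ‖z‖ ^ 2) := by
  simp [WithLp.prod_norm_eq_of_L2, add_comm]

theorem toLp_one_ne_zero (z : ℂ) : WithLp.toLp 2 (z, (1 : ℝ)) ≠ 0 := by
  rw [← norm_ne_zero_iff, norm_toLp_one]
  positivity

theorem dist_stereographicEmbedding (x y : OnePoint ℂ) :
    dist (stereographicEmbedding x) (stereographicEmbedding y) = chordal x y := by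
  have dist_coe_zero (z : ℂ) :
      dist (inversion 0 1 (WithLp.toLp 2 (z, (1 : ℝ)))) 0 = 1 / √(1 + ‖z‖ ^ 2) := by
    rw [dist_inversion_center, dist_zero_right, norm_toLp_one, one_pow]
  have dist_toLp (z w : ℂ) :
      dist (WithLp.toLp 2 (z, (1 : ℝ))) (WithLp.toLp 2 (w, 1)) = ‖w - z‖ := by
    rw [WithLp.prod_dist_eq_of_L2]
    simp [Real.sqrt_sq, dist_eq_norm_sub']
  cases x with
  | infty =>
    cases y with
    | infty => exact dist_self 0
    | coe w => exact (dist_comm _ _).trans (dist_coe_zero w)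
  | coe z =>
    cases y with
    | infty => exact dist_coe_zero z
    | coe w =>
      calc dist (inversion 0 1 (WithLp.toLp 2 (z, (1 : ℝ)))) (inversion 0 1 (WithLp.toLp 2 (w, 1)))
          = 1 / (√(1 + ‖z‖ ^ 2) * √(1 + ‖w‖ ^ 2)) * ‖w - z‖ := by
            rw [dist_inversion_inversion (toLp_one_ne_zero z) (toLp_one_ne_zero w), dist_toLp,
              dist_zero_right, dist_zero_right, norm_toLp_one, norm_toLp_one, one_pow]
        _ = ‖w - z‖ / √((1 + ‖z‖ ^ 2) * (1 + ‖w‖ ^ 2)) := by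
            rw [Real.sqrt_mul (by positivity), one_div_mul_eq_div]

theorem stereographicEmbedding_injective : Function.Injective stereographicEmbedding := by
  have coe_ne_zero (z : ℂ) : inversion 0 1 (WithLp.toLp 2 (z, (1 : ℝ))) ≠ 0 :=
    (inversion_eq_center one_ne_zero).not.2 (toLp_one_ne_zero z)
  intro x y hxy
  cases x with
  | infty =>
    cases y with
    | infty => rfl
    | coe w => exact absurd hxy.symm (coe_ne_zero w)
  | coe z =>
    cases y with
    | infty => exact absurd hxy (coe_ne_zero z)
    | coe w =>
      have hzw : (z, (1 : ℝ)) = (w, 1) :=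
        WithLp.toLp_injective 2 (inversion_injective 0 one_ne_zero hxy)
      rw [(Prod.mk.inj hzw).1]

theorem continuous_stereographicEmbedding : Continuous stereographicEmbedding := by
  refine (OnePoint.continuous_iff _).2 ⟨?_, ?_⟩
  · rw [coclosedCompact_eq_cocompact, ← Metric.cobounded_eq_cocompact]
    change Tendsto _ _ (𝓝 0)
    rw [tendsto_iff_dist_tendsto_zero]
    have hnorm : Tendsto (fun z : ℂ => ‖WithLp.toLp 2 (z, (1 : ℝ))‖) (cobounded ℂ) atTop :=
      tendsto_atTop_mono (fun z => WithLp.norm_fst_le _ (WithLp.toLp 2 (z, (1 : ℝ))))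
        tendsto_norm_cobounded_atTop
    refine hnorm.inv_tendsto_atTop.congr fun z => ?_
    change _ = dist (inversion 0 1 _) 0
    rw [dist_inversion_center, dist_zero_right, one_pow, one_div, Pi.inv_apply]
  · have htoLp : Continuous fun z : ℂ => WithLp.toLp 2 (z, (1 : ℝ)) := by fun_prop
    exact continuous_const.inversion continuous_const htoLp toLp_one_ne_zero

/-- The chordal distance as a metric on `ℂ ∪ {∞}`. Its topology is, definitionally, the topology of
the one-point compactification. -/
noncomputable abbrev chordalMetricSpace : MetricSpace (OnePoint ℂ) :=
  (continuous_stereographicEmbedding.isClosedEmbedding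
    stereographicEmbedding_injective).isEmbedding.comapMetricSpace stereographicEmbedding

attribute [local instance] chordalMetricSpace

theorem dist_eq_chordal (x y : OnePoint ℂ) : dist x y = chordal x y :=
  dist_stereographicEmbedding x y

theorem tendstoUniformlyOn_atTop_iff_chordal {α : Type*} {f : ℕ → α → OnePoint ℂ}
    {F : α → OnePoint ℂ} {s : Set α} :
    TendstoUniformlyOn f F atTop s ↔
      ∀ ε > 0, ∃ N, ∀ n ≥ N, ∀ z ∈ s, chordal (f n z) (F z) < ε := by
  simp only [Metric.tendstoUniformlyOn_iff, eventually_atTop, dist_comm (F _), dist_eq_chordal]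

/-- The addition `sphereAdd` with its arguments and value in the topological space `OnePoint ℂ`; the
underlying type `Option ℂ` carries no topology. -/
def onePointAdd (x y : OnePoint ℂ) : OnePoint ℂ := sphereAdd x y

/-- The inversion `sphereInv` as a self-map of the topological space `OnePoint ℂ`. -/
noncomputable def onePointInv (x : OnePoint ℂ) : OnePoint ℂ := sphereInv x

theorem onePointAdd_comm (x y : OnePoint ℂ) : onePointAdd x y = onePointAdd y x := by
  cases x with
  | infty => cases y <;> rfl
  | coe a =>
    cases y with
    | infty => rfl
    | coe b => exact congrArg OnePoint.some (add_comm a b)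

theorem continuousAt_onePointAdd_coe_left (a : ℂ) (y : OnePoint ℂ) :
    ContinuousAt (Function.uncurry onePointAdd) (a, y) := by
  rw [ContinuousAt, nhds_prod_eq, nhds_coe_eq]
  cases y with
  | infty =>
    rw [nhds_infty_eq, coclosedCompact_eq_cocompact, ← Metric.cobounded_eq_cocompact, prod_sup,
      prod_map_map_eq, prod_pure, map_map, tendsto_sup, tendsto_map'_iff, tendsto_map'_iff]
    exact ⟨tendsto_coe_cobounded_nhds_infty.comp (tendsto_add_nhds_prod_cobounded a),
      tendsto_const_nhds⟩
  | coe b =>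
    rw [nhds_coe_eq, prod_map_map_eq, ← nhds_prod_eq, tendsto_map'_iff]
    exact (continuous_coe.comp continuous_add).tendsto (a, b)

theorem continuousAt_onePointAdd {x y : OnePoint ℂ} (hxy : ¬(x = ∞ ∧ y = ∞)) :
    ContinuousAt (Function.uncurry onePointAdd) (x, y) := by
  rcases not_and_or.1 hxy with hx | hy
  · obtain ⟨a, rfl⟩ := ne_infty_iff_exists.1 hx
    exact continuousAt_onePointAdd_coe_left a y
  · obtain ⟨b, rfl⟩ := ne_infty_iff_exists.1 hy
    have hswap : Function.uncurry onePointAdd = Function.uncurry onePointAdd ∘ Prod.swap :=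
      funext fun q => onePointAdd_comm q.1 q.2
    rw [hswap]
    exact (continuousAt_onePointAdd_coe_left b x).comp_of_eq continuous_swap.continuousAt rfl

theorem onePointInv_coe_of_ne_zero {z : ℂ} (hz : z ≠ 0) : onePointInv z = (z⁻¹ : ℂ) :=
  if_neg hz

theorem onePointInv_infty : onePointInv ∞ = (0 : ℂ) :=
  rfl

theorem onePointInv_zero : onePointInv (0 : ℂ) = ∞ :=
  if_pos rfl

theorem onePointInv_involutive : Function.Involutive onePointInv := by
  intro x
  cases x with
  | infty => rw [onePointInv_infty, onePointInv_zero]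
  | coe z =>
    rcases eq_or_ne z 0 with rfl | hz
    · rw [onePointInv_zero, onePointInv_infty]
    · rw [onePointInv_coe_of_ne_zero hz, onePointInv_coe_of_ne_zero (inv_ne_zero hz), inv_inv]

theorem continuous_onePointInv : Continuous onePointInv := by
  refine (OnePoint.continuous_iff _).2 ⟨?_, continuous_iff_continuousAt.2 fun z => ?_⟩
  · rw [coclosedCompact_eq_cocompact, ← Metric.cobounded_eq_cocompact, onePointInv_infty]
    refine ((continuous_coe.tendsto 0).comp tendsto_inv₀_cobounded).congr' ?_
    filter_upwards [eventually_ne_cobounded (0 : ℂ)] with w hw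
    exact (onePointInv_coe_of_ne_zero hw).symm
  · rcases eq_or_ne z 0 with rfl | hz
    · rw [continuousAt_iff_punctured_nhds, onePointInv_zero]
      refine (tendsto_coe_cobounded_nhds_infty.comp tendsto_inv₀_nhdsNE_zero).congr' ?_
      filter_upwards [self_mem_nhdsWithin] with w hw
      exact (onePointInv_coe_of_ne_zero hw).symm
    · refine (continuous_coe.continuousAt.comp (continuousAt_inv₀ hz)).congr ?_
      filter_upwards [eventually_ne_nhds hz] with w hw
      exact (onePointInv_coe_of_ne_zero hw).symm

theorem MeroSphereOn.continuousOn {F : ℂ → OnePoint ℂ} {U : Set ℂ} (hF : MeroSphereOn F U) :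
    ContinuousOn F U := by
  intro z hz
  obtain ⟨V, hV, φ, hφ, h⟩ := hF z hz
  have hcoe : ContinuousAt (fun w => (φ w : OnePoint ℂ)) z :=
    continuous_coe.continuousAt.comp (hφ z (mem_of_mem_nhds hV)).continuousAt
  rcases h with h | h
  · exact (hcoe.congr (eventually_of_mem hV fun w hw => (h w hw).symm)).continuousWithinAt
  · refine ((continuous_onePointInv.continuousAt.comp hcoe).congr
      (eventually_of_mem hV fun w hw => ?_)).continuousWithinAt
    exact (congrArg onePointInv (h w hw)).symm.trans (onePointInv_involutive (F w))

theorem meromorphic_sum_uniform_convergence_general {ι X : Type*} [TopologicalSpace X]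
    {p : Filter ι} {K : Set X} (hK : IsCompact K) {f g : ι → X → OnePoint ℂ} {F G : X → OnePoint ℂ}
    (hF : ContinuousOn F K) (hG : ContinuousOn G K)
    (hfF : TendstoUniformlyOn f F p K) (hgG : TendstoUniformlyOn g G p K)
    (hFG : ∀ z ∈ K, ¬(F z = ∞ ∧ G z = ∞)) :
    TendstoUniformlyOn (fun n z => onePointAdd (f n z) (g n z))
      (fun z => onePointAdd (F z) (G z)) p K :=
  have hpair : TendstoUniformlyOn (fun n z => (f n z, g n z)) (fun z => (F z, G z)) p K :=
    fun r hr => tendsto_diag.eventually (hfF.prodMk hgG r hr)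
  tendstoUniformlyOn_comp_of_isCompact_image (hK.image_of_continuousOn (hF.prodMk hG))
    (fun z hz => continuousAt_onePointAdd (hFG z hz)) hpair

/-- If meromorphic `f_n → f` and `g_n → g` uniformly on `U` for the chordal distance,
none of the functions is identically `∞` on a connected component of `U`, and `f`, `g`
have no common pole, then `f_n + g_n → f + g` uniformly on every compact subset of
`U` for the chordal distance. -/
theorem meromorphic_sum_uniform_convergence
    (U : Set ℂ) (hU : IsOpen U)
    (f g : ℕ → ℂ → Option ℂ) (F G : ℂ → Option ℂ)
    (hf : ∀ n, MeroSphereOn (f n) U) (hg : ∀ n, MeroSphereOn (g n) U)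
    (hF : MeroSphereOn F U) (hG : MeroSphereOn G U)
    (hfne : ∀ n, ∀ z ∈ U, ∃ w ∈ connectedComponentIn U z, f n w ≠ none)
    (hgne : ∀ n, ∀ z ∈ U, ∃ w ∈ connectedComponentIn U z, g n w ≠ none)
    (hFne : ∀ z ∈ U, ∃ w ∈ connectedComponentIn U z, F w ≠ none)
    (hGne : ∀ z ∈ U, ∃ w ∈ connectedComponentIn U z, G w ≠ none)
    (hfF : ∀ ε : ℝ, 0 < ε → ∃ N : ℕ, ∀ n ≥ N, ∀ z ∈ U, chordal (f n z) (F z) < ε)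
    (hgG : ∀ ε : ℝ, 0 < ε → ∃ N : ℕ, ∀ n ≥ N, ∀ z ∈ U, chordal (g n z) (G z) < ε)
    (hnocommonpole : ∀ z ∈ U, ¬(F z = none ∧ G z = none)) :
    ∀ K : Set ℂ, K ⊆ U → IsCompact K → ∀ ε : ℝ, 0 < ε →
      ∃ N : ℕ, ∀ n ≥ N, ∀ z ∈ K,
        chordal (sphereAdd (f n z) (g n z)) (sphereAdd (F z) (G z)) < ε := by
  exact fun K hKU hK => tendstoUniformlyOn_atTop_iff_chordal.1 <|
    meromorphic_sum_uniform_convergence_general hK (hF.continuousOn.mono hKU)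
      (hG.continuousOn.mono hKU) ((tendstoUniformlyOn_atTop_iff_chordal.2 hfF).mono hKU)
      ((tendstoUniformlyOn_atTop_iff_chordal.2 hgG).mono hKU) fun z hz => hnocommonpole z (hKU hz)
end
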